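/- arXiv:2505.15119 — 4 statements merged into one kernel-verified Lean document; each statement's English description precedes it below -/
import Mathlib

section
/- (Ishii–Lions lemma / theorem on sums.) Let Ω ⊂ ℝⁿ be open, u, v ∈ C(Ω), and let φ : ℝⁿ → ℝ be C². Assume (x̄,ȳ) ∈ Ω×Ω is a local maximum point of the function (x,y) ↦ u(x) − v(y) − φ(x−y) on Ω×Ω. Set z = Dφ(x̄−ȳ) and Z = D²φ(x̄−ȳ). Then for every ε > 0 such that εZ < I (i.e. I − εZ is positive definite), there exist X, Y ∈ S(n) such that (z,X) ∈ J̄^{2,+}_Ω u(x̄), (z,Y) ∈ J̄^{2,−}_Ω v(ȳ), and, in the Loewner order on 2n×2n symmetric matrices, −(2/ε)·[[I,0],[0,I]] ≤ [[X,0],[0,−Y]] ≤ [[Z^ε,−Z^ε],[−Z^ε,Z^ε]], where Z^ε = (I−εZ)^{−1}Z. -/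
open Metric Set Filter

open scoped RealInnerProductSpace Topology

/-- The quadratic form `⟨Xh, h⟩` of a matrix `X` at `h`. -/
noncomputable def quadForm {n : ℕ} (X : Matrix (Fin n) (Fin n) ℝ)
    (h : EuclideanSpace ℝ (Fin n)) : ℝ :=
  ∑ i, ∑ j, X i j * h j * h i

/-- `(p, X)` belongs to the second-order superjet `J^{2,+}_Ω u (x)`. -/
def InSuperJet {n : ℕ} (Ω : Set (EuclideanSpace ℝ (Fin n))) (u : EuclideanSpace ℝ (Fin n) → ℝ)
    (x p : EuclideanSpace ℝ (Fin n)) (X : Matrix (Fin n) (Fin n) ℝ) : Prop :=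
  ∀ ε : ℝ, 0 < ε → ∃ δ : ℝ, 0 < δ ∧ ∀ h : EuclideanSpace ℝ (Fin n),
    x + h ∈ Ω → ‖h‖ < δ →
      u (x + h) ≤ u x + ⟪p, h⟫ + (1 / 2) * quadForm X h + ε * ‖h‖ ^ 2

/-- `(p, X)` belongs to the second-order subjet `J^{2,-}_Ω u (x)`. -/
def InSubJet {n : ℕ} (Ω : Set (EuclideanSpace ℝ (Fin n))) (u : EuclideanSpace ℝ (Fin n) → ℝ)
    (x p : EuclideanSpace ℝ (Fin n)) (X : Matrix (Fin n) (Fin n) ℝ) : Prop :=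
  ∀ ε : ℝ, 0 < ε → ∃ δ : ℝ, 0 < δ ∧ ∀ h : EuclideanSpace ℝ (Fin n),
    x + h ∈ Ω → ‖h‖ < δ →
      u x + ⟪p, h⟫ + (1 / 2) * quadForm X h - ε * ‖h‖ ^ 2 ≤ u (x + h)

/-- `(p, X)` belongs to the closed superjet `J̄^{2,+}_Ω u (x)`. -/
def InClosedSuperJet {n : ℕ} (Ω : Set (EuclideanSpace ℝ (Fin n)))
    (u : EuclideanSpace ℝ (Fin n) → ℝ) (x p : EuclideanSpace ℝ (Fin n))
    (X : Matrix (Fin n) (Fin n) ℝ) : Prop :=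
  ∃ (xs ps : ℕ → EuclideanSpace ℝ (Fin n)) (Xs : ℕ → Matrix (Fin n) (Fin n) ℝ),
    (∀ k, xs k ∈ Ω ∧ InSuperJet Ω u (xs k) (ps k) (Xs k)) ∧
    Tendsto xs atTop (𝓝 x) ∧ Tendsto (fun k => u (xs k)) atTop (𝓝 (u x)) ∧
    Tendsto ps atTop (𝓝 p) ∧ Tendsto Xs atTop (𝓝 X)

/-- `(p, X)` belongs to the closed subjet `J̄^{2,-}_Ω u (x)`. -/
def InClosedSubJet {n : ℕ} (Ω : Set (EuclideanSpace ℝ (Fin n)))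
    (u : EuclideanSpace ℝ (Fin n) → ℝ) (x p : EuclideanSpace ℝ (Fin n))
    (X : Matrix (Fin n) (Fin n) ℝ) : Prop :=
  ∃ (xs ps : ℕ → EuclideanSpace ℝ (Fin n)) (Xs : ℕ → Matrix (Fin n) (Fin n) ℝ),
    (∀ k, xs k ∈ Ω ∧ InSubJet Ω u (xs k) (ps k) (Xs k)) ∧
    Tendsto xs atTop (𝓝 x) ∧ Tendsto (fun k => u (xs k)) atTop (𝓝 (u x)) ∧
    Tendsto ps atTop (𝓝 p) ∧ Tendsto Xs atTop (𝓝 X)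

noncomputable def hessianMatrix {n : ℕ} (ψ : EuclideanSpace ℝ (Fin n) → ℝ)
    (x : EuclideanSpace ℝ (Fin n)) : Matrix (Fin n) (Fin n) ℝ :=
  Matrix.of fun i j =>
    iteratedFDeriv ℝ 2 ψ x ![EuclideanSpace.single i 1, EuclideanSpace.single j 1]

theorem il_telescope (f : ℝ → ℝ) (a C : ℝ)
    (h : ∀ s t : ℝ, 0 ≤ s → s ≤ t → t ≤ 1 → f t - f s ≤ a * (t - s) + C * (t - s) ^ 2) :
    f 1 - f 0 ≤ a := by
  have key : ∀ N : ℕ, f 1 - f 0 ≤ a + C * (1 / ((N : ℝ) + 1)) := by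
    intro N
    have hN : (0 : ℝ) < (N : ℝ) + 1 := by positivity
    have hs : ∀ m : ℕ, m ≤ N + 1 → f (m / ((N : ℝ) + 1)) - f 0 ≤
        m * (a * (1 / ((N : ℝ) + 1)) + C * (1 / ((N : ℝ) + 1)) ^ 2) := by
      intro m
      induction m with
      | zero => intro _; simp
      | succ m ih =>
        intro hm
        have h1 := ih (by omega)
        have h2 := h (m / ((N : ℝ) + 1)) ((m + 1 : ℕ) / ((N : ℝ) + 1)) (by positivity)
          (by gcongr; simp) (by
            rw [div_le_one hN]; exact_mod_cast hm)
        have h3 : ((m + 1 : ℕ) : ℝ) / ((N : ℝ) + 1) - m / ((N : ℝ) + 1) = 1 / ((N : ℝ) + 1) := by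
          push_cast; ring
        rw [h3] at h2
        push_cast at *
        linarith
    have h1 := hs (N + 1) le_rfl
    have h2 : ((N + 1 : ℕ) : ℝ) / ((N : ℝ) + 1) = 1 := by
      push_cast; field_simp
    rw [h2] at h1
    have h3 : ((N + 1 : ℕ) : ℝ) * (a * (1 / ((N : ℝ) + 1)) + C * (1 / ((N : ℝ) + 1)) ^ 2)
        = a + C * (1 / ((N : ℝ) + 1)) := by
      push_cast; field_simp
    rw [h3] at h1
    exact h1
  have hlim : Tendsto (fun N : ℕ => a + C * (1 / ((N : ℝ) + 1))) atTop (𝓝 (a + C * 0)) :=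
    tendsto_const_nhds.add (tendsto_const_nhds.mul tendsto_one_div_add_atTop_nhds_zero_nat)
  have := ge_of_tendsto' hlim key
  simpa using this

section Abstract

variable {F : Type*} [NormedAddCommGroup F] [InnerProductSpace ℝ F]

/-- `s` is a selection of subgradients of `g`. -/
def ILSel (g : F → ℝ) (s : F → F) : Prop := ∀ x y, g x + ⟪s x, y - x⟫ ≤ g y

theorem il_second_order {g : F → ℝ} {s : F → F} (hs : ILSel g s) {x0 : F} {M : F →L[ℝ] F}
    (hd : HasFDerivAt s M x0) {κ : ℝ} (hκ : 0 < κ) :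
    ∃ δ > 0, ∀ h : F, ‖h‖ < δ →
      g (x0 + h) ≤ g x0 + ⟪s x0, h⟫ + (1 / 2) * ⟪M h, h⟫ + κ * ‖h‖ ^ 2 ∧
      g x0 + ⟪s x0, h⟫ + (1 / 2) * ⟪M h, h⟫ - κ * ‖h‖ ^ 2 ≤ g (x0 + h) := by
  have h1 := hasFDerivAt_iff_isLittleO_nhds_zero.1 hd
  have h2 := h1.def hκ
  obtain ⟨δ, hδ, hb⟩ := Metric.eventually_nhds_iff.1 h2
  refine ⟨δ, hδ, fun h hh => ?_⟩
  have hb' : ∀ t : ℝ, 0 ≤ t → t ≤ 1 →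
      |⟪s (x0 + t • h), h⟫ - ⟪s x0, h⟫ - t * ⟪M h, h⟫| ≤ κ * ‖h‖ ^ 2 := by
    intro t ht0 ht1
    have hn : ‖t • h‖ ≤ ‖h‖ := by
      rw [norm_smul, Real.norm_of_nonneg ht0]
      exact mul_le_of_le_one_left (norm_nonneg _) ht1
    have h3 := @hb (t • h) (by rw [dist_zero_right]; linarith)
    have h4 : ⟪s (x0 + t • h), h⟫ - ⟪s x0, h⟫ - t * ⟪M h, h⟫ =
        ⟪s (x0 + t • h) - s x0 - M (t • h), h⟫ := by
      rw [inner_sub_left, inner_sub_left, map_smul, real_inner_smul_left]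
    rw [h4]
    calc _ ≤ ‖s (x0 + t • h) - s x0 - M (t • h)‖ * ‖h‖ := abs_real_inner_le_norm _ _
      _ ≤ (κ * ‖t • h‖) * ‖h‖ := by gcongr
      _ ≤ (κ * ‖h‖) * ‖h‖ := by gcongr
      _ = _ := by ring
  have hsub : ∀ p q : ℝ, (x0 + q • h) - (x0 + p • h) = (q - p) • h := by
    intro p q; module
  have hup : ∀ p t : ℝ, p ≤ t → g (x0 + t • h) - g (x0 + p • h) ≤
      (t - p) * ⟪s (x0 + t • h), h⟫ := by
    intro p t _
    have := hs (x0 + t • h) (x0 + p • h)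
    rw [hsub, real_inner_smul_right] at this
    linarith
  have hlo : ∀ p t : ℝ, p ≤ t → (t - p) * ⟪s (x0 + p • h), h⟫ ≤
      g (x0 + t • h) - g (x0 + p • h) := by
    intro p t _
    have := hs (x0 + p • h) (x0 + t • h)
    rw [hsub, real_inner_smul_right] at this
    linarith
  constructor
  · have := il_telescope (fun t => g (x0 + t • h) - t * ⟪s x0, h⟫ - t ^ 2 / 2 * ⟪M h, h⟫)
      (κ * ‖h‖ ^ 2) (⟪M h, h⟫ / 2) (by
        intro p t hp hpt ht
        have e1 := hup p t hpt
        have e2 := (abs_le.1 (hb' t (hp.trans hpt) ht)).2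
        have e3 := mul_le_mul_of_nonneg_left e2 (sub_nonneg.2 hpt)
        nlinarith)
    simp at this
    linarith
  · have := il_telescope (fun t => -(g (x0 + t • h) - t * ⟪s x0, h⟫ - t ^ 2 / 2 * ⟪M h, h⟫))
      (κ * ‖h‖ ^ 2) (⟪M h, h⟫ / 2) (by
        intro p t hp hpt ht
        have e1 := hlo p t hpt
        have e2 := (abs_le.1 (hb' p hp (hpt.trans ht))).1
        have e3 := mul_le_mul_of_nonneg_left e2 (sub_nonneg.2 hpt)
        nlinarith)
    simp at this
    linarith

/-- existence of the proximal point -/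
theorem il_prox_exists [FiniteDimensional ℝ F] {g : F → ℝ} {s : F → F} (hs : ILSel g s)
    (hg : Continuous g) (z : F) : ∃ x, ∀ y, g x + ⟪z - x, y - x⟫ ≤ g y := by
  have hprop : ProperSpace F := FiniteDimensional.proper ℝ F
  set f : F → ℝ := fun x => g x + (1 / 2) * ‖x - z‖ ^ 2 with hf
  have hfc : Continuous f := by fun_prop
  obtain ⟨x, -, hx⟩ := (isCompact_closedBall z (2 * ‖s z‖)).exists_isMinOn
    ⟨z, mem_closedBall_self (by positivity)⟩ hfc.continuousOn
  have hmin : ∀ y, f x ≤ f y := by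
    intro y
    by_cases hy : y ∈ closedBall z (2 * ‖s z‖)
    · exact hx hy
    · have h1 : f x ≤ f z := hx (mem_closedBall_self (by positivity))
      have h2 := hs z y
      have h3 := (abs_le.1 (abs_real_inner_le_norm (s z) (y - z))).1
      rw [mem_closedBall, dist_eq_norm, not_le] at hy
      simp only [hf, sub_self, norm_zero] at h1 ⊢
      nlinarith [norm_nonneg (y - z)]
  refine ⟨x, fun y => ?_⟩
  have hconv : ∀ t : ℝ, 0 < t → t < 1 → g (x + t • (y - x)) ≤ (1 - t) * g x + t * g y := by
    intro t ht0 ht1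
    have h1 := hs (x + t • (y - x)) x
    have h2 := hs (x + t • (y - x)) y
    have e1 : x - (x + t • (y - x)) = (-t) • (y - x) := by module
    have e2 : y - (x + t • (y - x)) = (1 - t) • (y - x) := by module
    rw [e1, real_inner_smul_right] at h1
    rw [e2, real_inner_smul_right] at h2
    nlinarith
  have hkey : ∀ t : ℝ, 0 < t → t < 1 →
      -(t / 2 * ‖y - x‖ ^ 2) ≤ g y - g x - ⟪z - x, y - x⟫ := by
    intro t ht0 ht1
    have h1 := hmin (x + t • (y - x))
    have h2 := hconv t ht0 ht1
    have e1 : x + t • (y - x) - z = t • (y - x) - (z - x) := by module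
    have e2 : ‖x - z‖ = ‖z - x‖ := norm_sub_rev _ _
    simp only [hf] at h1
    rw [e1, e2, norm_sub_sq_real (t • (y - x)) (z - x), real_inner_smul_left, norm_smul, Real.norm_of_nonneg ht0.le,
      real_inner_comm (z - x) (y - x)] at h1
    have : t * (-(t / 2 * ‖y - x‖ ^ 2)) ≤ t * (g y - g x - ⟪z - x, y - x⟫) := by nlinarith
    exact le_of_mul_le_mul_left this ht0
  have hlim : Tendsto (fun t : ℝ => -(t / 2 * ‖y - x‖ ^ 2)) (𝓝[>] 0) (𝓝 0) := by
    have : Continuous (fun t : ℝ => -(t / 2 * ‖y - x‖ ^ 2)) := by fun_prop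
    have := this.tendsto 0
    simp at this
    exact this.mono_left nhdsWithin_le_nhds
  have : (0 : ℝ) ≤ g y - g x - ⟪z - x, y - x⟫ := by
    refine le_of_tendsto hlim ?_
    filter_upwards [Ioo_mem_nhdsGT (zero_lt_one' ℝ)] with t ht using hkey t ht.1 ht.2
  linarith

theorem il_prox_lip {g : F → ℝ} {x x' z z' : F} (h : ∀ y, g x + ⟪z - x, y - x⟫ ≤ g y)
    (h' : ∀ y, g x' + ⟪z' - x', y - x'⟫ ≤ g y) : ‖x - x'‖ ≤ ‖z - z'‖ := by
  have h1 := h x'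
  have h2 := h' x
  have e1 : x' - x = -(x - x') := by abel
  rw [e1, inner_neg_right] at h1
  have e2 : ⟪z - x, x - x'⟫ - ⟪z' - x', x - x'⟫ = ⟪z - z', x - x'⟫ - ‖x - x'‖ ^ 2 := by
    rw [← real_inner_self_eq_norm_sq, ← inner_sub_left, ← inner_sub_left]
    congr 1; abel
  have h3 : ‖x - x'‖ ^ 2 ≤ ‖z - z'‖ * ‖x - x'‖ :=
    le_trans (by linarith) (real_inner_le_norm _ _)
  by_contra hc
  push Not at hc
  nlinarith [norm_nonneg (z - z')]

/-- Two subgradients close when touched from above by a paraboloid. -/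
theorem il_subgrad_bound {g : F → ℝ} {x0 p0 x' p' : F} {C : ℝ} (hC : 0 ≤ C)
    (h0 : ∀ y, g x0 + ⟪p0, y - x0⟫ ≤ g y)
    (ht : ∀ h, g (x0 + h) ≤ g x0 + ⟪p0, h⟫ + C / 2 * ‖h‖ ^ 2)
    (h' : ∀ y, g x' + ⟪p', y - x'⟫ ≤ g y) : ‖p' - p0‖ ≤ 2 * C * ‖x' - x0‖ + 0 := by
  have key : ∀ k, ⟪p' - p0, k⟫ ≤ C / 2 * ‖(x' - x0) + k‖ ^ 2 := by
    intro k
    have h1 := h' (x' + k)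
    have h2 := ht (x' - x0 + k)
    have h3 := h0 x'
    have e : x0 + (x' - x0 + k) = x' + k := by abel
    rw [e, inner_add_right] at h2
    rw [add_sub_cancel_left] at h1
    rw [inner_sub_left]
    linarith
  set d := p' - p0
  set w := x' - x0
  rw [add_zero]
  by_cases hd : ‖d‖ = 0
  · rw [hd]; positivity
  have hd' : 0 < ‖d‖ := lt_of_le_of_ne (norm_nonneg _) (Ne.symm hd)
  by_cases hw : ‖w‖ = 0
  · -- w = 0
    have hw' : w = 0 := norm_eq_zero.1 hw
    have h1 := key ((1 / (C + 1)) • d)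
    rw [hw', zero_add, real_inner_smul_right, real_inner_self_eq_norm_sq, norm_smul,
      Real.norm_of_nonneg (by positivity)] at h1
    exfalso
    have h2 : (1 / (C + 1)) * ‖d‖ ^ 2 * (1 - C / 2 * (1 / (C + 1))) ≤ 0 := by nlinarith
    have h3 : 0 < 1 - C / 2 * (1 / (C + 1)) := by
      have : C / 2 * (1 / (C + 1)) < 1 := by
        rw [mul_one_div, div_lt_one (by positivity)]; linarith
      linarith
    have : 0 < (1 / (C + 1)) * ‖d‖ ^ 2 * (1 - C / 2 * (1 / (C + 1))) := by positivity
    linarith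
  have hw' : 0 < ‖w‖ := lt_of_le_of_ne (norm_nonneg _) (Ne.symm hw)
  have h1 := key ((‖w‖ / ‖d‖) • d)
  rw [real_inner_smul_right, real_inner_self_eq_norm_sq] at h1
  have h2 : ‖w + (‖w‖ / ‖d‖) • d‖ ≤ 2 * ‖w‖ := by
    refine (norm_add_le _ _).trans ?_
    rw [norm_smul, Real.norm_of_nonneg (by positivity), div_mul_cancel₀ _ hd]
    linarith
  have h3 : ‖w‖ / ‖d‖ * ‖d‖ ^ 2 = ‖w‖ * ‖d‖ := by field_simp
  rw [h3] at h1
  have h4 : ‖w + (‖w‖ / ‖d‖) • d‖ ^ 2 ≤ (2 * ‖w‖) ^ 2 := by gcongr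
  have h5 : ‖w‖ * ‖d‖ ≤ ‖w‖ * (2 * C * ‖w‖) := by nlinarith
  exact le_of_mul_le_mul_left h5 hw'

theorem il_jensen [FiniteDimensional ℝ F] {g : F → ℝ} {s : F → F} (hs : ILSel g s)
    (hg : Continuous g) (hg0 : 0 ≤ g 0) (B : F →L[ℝ] F) (hB : ∀ x y, ⟪B x, y⟫ = ⟪x, B y⟫)
    {η : ℝ} (hη : 0 < η) (hup : ∀ x, g x ≤ (1 / 2) * ⟪B x, x⟫ - η * ‖x‖ ^ 2)
    {δ : ℝ} (hδ : 0 < δ) :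
    ∃ (x0 : F) (M : F →L[ℝ] F), ‖x0‖ < δ ∧ ‖s x0‖ < δ ∧ HasFDerivAt s M x0 ∧
      ∀ h, g (x0 + h) ≤ g x0 + ⟪s x0, h⟫ + (1 / 2) * ⟪B h, h⟫ := by
  have hprop : ProperSpace F := FiniteDimensional.proper ℝ F
  let _ : MeasurableSpace F := borel F
  have _ : BorelSpace F := ⟨rfl⟩
  choose P hP using il_prox_exists hs hg
  have hPl : LipschitzWith 1 P := LipschitzWith.of_dist_le_mul fun z z' => by
    rw [dist_eq_norm, dist_eq_norm, NNReal.coe_one, one_mul]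
    exact il_prox_lip (hP z) (hP z')
  let μ : MeasureTheory.Measure F := MeasureTheory.Measure.hausdorffMeasure (Module.finrank ℝ F)
  have hae : ∀ᵐ z ∂μ, DifferentiableAt ℝ P z := hPl.ae_differentiableAt
  set N : Set F := {z | ¬ DifferentiableAt ℝ P z} with hN
  have hN0 : μ N = 0 := hae
  set Ψ : F → F := fun z => z - P z - B (P z) with hΨ
  obtain ⟨CΨ, hΨl⟩ : ∃ C, LipschitzWith C Ψ :=
    ⟨_, (LipschitzWith.id.sub hPl).sub (B.lipschitz.comp hPl)⟩
  have hΨN : μ (Ψ '' N) = 0 := by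
    have := hΨl.hausdorffMeasure_image_le (d := (Module.finrank ℝ F : ℝ)) (by positivity) N
    have h2 : MeasureTheory.Measure.hausdorffMeasure (Module.finrank ℝ F : ℝ) N = 0 := hN0
    rw [h2, mul_zero] at this
    exact le_antisymm this zero_le
  -- radius
  set ρ : ℝ := δ / (1 + (1 + ‖B‖) / η) with hρ
  have hρ0 : 0 < ρ := by positivity
  have hball : ∃ p ∈ ball (0 : F) ρ, p ∉ Ψ '' N := by
    by_contra hc
    push Not at hc
    have h1 : μ (ball (0 : F) ρ) ≤ μ (Ψ '' N) := MeasureTheory.measure_mono hc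
    rw [hΨN] at h1
    exact absurd h1 (not_le.2 (Metric.measure_ball_pos μ 0 hρ0))
  obtain ⟨p, hp, hpN⟩ := hball
  rw [mem_ball_zero_iff] at hp
  -- maximizer
  set G : F → ℝ := fun x => g x - (1 / 2) * ⟪B x, x⟫ - ⟪p, x⟫ with hG
  have hGc : Continuous G := by fun_prop
  have hG0 : 0 ≤ G 0 := by simpa [hG] using hg0
  have hGb : ∀ x, 0 ≤ G x → ‖x‖ ≤ ‖p‖ / η := by
    intro x hx
    have h1 := hup x
    have h2 := (abs_le.1 (abs_real_inner_le_norm p x)).1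
    have h3 : η * ‖x‖ ^ 2 ≤ ‖p‖ * ‖x‖ := by simp only [hG] at hx; linarith
    rw [le_div_iff₀ hη]
    by_contra hc
    push Not at hc
    have : 0 < ‖x‖ := by
      rcases (norm_nonneg x).eq_or_lt with h | h
      · rw [← h] at hc; nlinarith [norm_nonneg p]
      · exact h
    nlinarith
  obtain ⟨x0, -, hx0⟩ := (isCompact_closedBall (0 : F) (‖p‖ / η)).exists_isMaxOn
    ⟨0, mem_closedBall_self (by positivity)⟩ hGc.continuousOn
  have hx00 : 0 ≤ G x0 := hG0.trans (hx0 (mem_closedBall_self (by positivity)))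
  have hmax : ∀ y, G y ≤ G x0 := by
    intro y
    by_cases hy : 0 ≤ G y
    · exact hx0 (mem_closedBall_zero_iff.2 (hGb y hy))
    · linarith
  have hx0n := hGb x0 hx00
  have htouch0 : ∀ h, g (x0 + h) ≤ g x0 + ⟪p + B x0, h⟫ + (1 / 2) * ⟪B h, h⟫ := by
    intro h
    have h1 := hmax (x0 + h)
    simp only [hG, map_add, inner_add_left, inner_add_right] at h1 ⊢
    have h2 : ⟪B h, x0⟫ = ⟪B x0, h⟫ := by rw [hB, real_inner_comm]
    linarith
  have hBn : ∀ h, ⟪B h, h⟫ ≤ ‖B‖ * ‖h‖ ^ 2 := by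
    intro h
    calc _ ≤ ‖B h‖ * ‖h‖ := real_inner_le_norm _ _
      _ ≤ (‖B‖ * ‖h‖) * ‖h‖ := by gcongr; exact B.le_opNorm h
      _ = _ := by ring
  -- gradient identification
  have hsx : s x0 = p + B x0 := by
    set d := s x0 - (p + B x0) with hd
    have key : ∀ h, ⟪d, h⟫ ≤ ‖B‖ / 2 * ‖h‖ ^ 2 := by
      intro h
      have h1 := htouch0 h
      have h2 := hs x0 (x0 + h)
      rw [add_sub_cancel_left] at h2
      have h3 := hBn h
      rw [hd, inner_sub_left]
      linarith
    have h1 := key ((1 / (‖B‖ + 1)) • d)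
    rw [real_inner_smul_right, real_inner_self_eq_norm_sq, norm_smul,
      Real.norm_of_nonneg (by positivity)] at h1
    have h2 : (1 / (‖B‖ + 1)) * ‖d‖ ^ 2 * (1 - ‖B‖ / 2 * (1 / (‖B‖ + 1))) ≤ 0 := by nlinarith
    have h3 : 0 < 1 - ‖B‖ / 2 * (1 / (‖B‖ + 1)) := by
      have : ‖B‖ / 2 * (1 / (‖B‖ + 1)) < 1 := by
        rw [mul_one_div, div_lt_one (by positivity)]; linarith [norm_nonneg B]
      linarith
    by_contra hne
    have hd0 : 0 < ‖d‖ := norm_pos_iff.2 (sub_ne_zero.2 hne)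
    have : 0 < (1 / (‖B‖ + 1)) * ‖d‖ ^ 2 * (1 - ‖B‖ / 2 * (1 / (‖B‖ + 1))) := by positivity
    linarith
  have htouch : ∀ h, g (x0 + h) ≤ g x0 + ⟪s x0, h⟫ + (1 / 2) * ⟪B h, h⟫ := by
    rw [hsx]; exact htouch0
  have htouchC : ∀ h, g (x0 + h) ≤ g x0 + ⟪s x0, h⟫ + ‖B‖ / 2 * ‖h‖ ^ 2 := by
    intro h
    have := htouch h
    have := hBn h
    linarith
  -- Q
  set Q : F → F := fun x => x + s x with hQ
  have hPQ : ∀ x, P (Q x) = x := by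
    intro x
    have h1 := hP (Q x)
    have h2 : ∀ y, g x + ⟪Q x - x, y - x⟫ ≤ g y := by
      intro y
      simpa [hQ] using hs x y
    have := il_prox_lip h1 h2
    rw [sub_self, norm_zero] at this
    exact sub_eq_zero.1 (norm_le_zero_iff.1 this)
  have hΨQ : Ψ (Q x0) = p := by
    simp only [hΨ, hPQ]
    simp only [hQ, hsx]; abel
  have hdiff : DifferentiableAt ℝ P (Q x0) := by
    by_contra hc
    exact hpN ⟨Q x0, hc, hΨQ⟩
  -- bound
  have hbound : ∀ z', ‖z' - Q x0‖ ≤ (1 + 2 * ‖B‖) * ‖P z' - x0‖ := by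
    intro z'
    have h1 := il_subgrad_bound (norm_nonneg B) (hs x0) htouchC (hP z')
    have e : z' - Q x0 = (P z' - x0) + ((z' - P z') - s x0) := by simp only [hQ]; abel
    rw [e]
    refine (norm_add_le _ _).trans ?_
    linarith
  set L := fderiv ℝ P (Q x0) with hL
  have hLd : HasFDerivAt P L (Q x0) := hdiff.hasFDerivAt
  have hinj : Function.Injective L := by
    rw [injective_iff_map_eq_zero]
    intro w hw
    by_contra hw0
    have hwn : 0 < ‖w‖ := norm_pos_iff.2 hw0
    have hc : (0 : ℝ) < 1 / (2 * (1 + 2 * ‖B‖)) := by positivity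
    have h1 := (hasFDerivAt_iff_isLittleO_nhds_zero.1 hLd).def hc
    obtain ⟨r, hr, hb⟩ := Metric.eventually_nhds_iff.1 h1
    have hn : ‖(r / (2 * ‖w‖)) • w‖ = r / 2 := by
      rw [norm_smul, Real.norm_of_nonneg (by positivity)]; field_simp
    have h2 := @hb ((r / (2 * ‖w‖)) • w) (by rw [dist_zero_right, hn]; linarith)
    rw [map_smul, hw, smul_zero, sub_zero, hPQ, hn] at h2
    have h3 := hbound (Q x0 + (r / (2 * ‖w‖)) • w)
    rw [add_sub_cancel_left, hn] at h3
    have h4 : (1 + 2 * ‖B‖) * ‖P (Q x0 + (r / (2 * ‖w‖)) • w) - x0‖ ≤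
        (1 + 2 * ‖B‖) * (1 / (2 * (1 + 2 * ‖B‖)) * (r / 2)) := by gcongr
    have h5 : (1 + 2 * ‖B‖) * (1 / (2 * (1 + 2 * ‖B‖)) * (r / 2)) = r / 4 := by
      field_simp; norm_num
    linarith
  let Le : F ≃L[ℝ] F :=
    (LinearEquiv.ofInjectiveEndo (L : F →ₗ[ℝ] F) hinj).toContinuousLinearEquiv
  have hLe : (Le : F →L[ℝ] F) = L := by
    ext v; rfl
  have hQc : ContinuousAt Q x0 := by
    rw [Metric.continuousAt_iff]
    intro e he
    refine ⟨e / (1 + 2 * ‖B‖), by positivity, fun {x} hx => ?_⟩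
    rw [dist_eq_norm] at hx ⊢
    have := hbound (Q x)
    rw [hPQ] at this
    rw [lt_div_iff₀ (by positivity)] at hx
    linarith
  have hQd : HasFDerivAt Q (Le.symm : F →L[ℝ] F) x0 :=
    HasFDerivAt.of_local_left_inverse hQc (by rw [hLe]; exact hLd)
      (Eventually.of_forall hPQ)
  have hx0δ : ‖x0‖ ≤ ρ / η := hx0n.trans (by gcongr)
  have hρe : ρ + (1 + ‖B‖) * (ρ / η) = δ := by rw [hρ]; field_simp
  have hρη : 0 < ρ / η := by positivity
  refine ⟨x0, (Le.symm : F →L[ℝ] F) - ContinuousLinearMap.id ℝ F, ?_, ?_, ?_, htouch⟩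
  · nlinarith [norm_nonneg B]
  · rw [hsx]
    have h1 := norm_add_le p (B x0)
    have h2 := B.le_opNorm x0
    have h3 : ‖B‖ * ‖x0‖ ≤ ‖B‖ * (ρ / η) := by gcongr
    linarith
  · have : s = fun x => Q x - x := by ext x; simp [hQ]
    rw [this]
    exact hQd.sub (hasFDerivAt_id x0)

end Abstract
section Pair

variable {E : Type*} [NormedAddCommGroup E] [InnerProductSpace ℝ E]

theorem il_young (W T : E →L[ℝ] E) (hWs : ∀ x y, ⟪W x, y⟫ = ⟪x, W y⟫)
    (hWT : ∀ x, W (T x) = x) (hW : ∀ x, 0 ≤ ⟪W x, x⟫) {θ : ℝ} (hθ : 0 < θ) (x y : E) :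
    ⟪y, x⟫ ≤ θ / 2 * ⟪W x, x⟫ + θ⁻¹ / 2 * ⟪T y, y⟫ := by
  have h := hW (x - θ⁻¹ • T y)
  rw [map_sub, map_smul, hWT, inner_sub_left, inner_sub_right, inner_sub_right,
    real_inner_smul_left, real_inner_smul_left, real_inner_smul_right, real_inner_smul_right,
    hWs x (T y), hWT, real_inner_comm y x, real_inner_comm (T y) y] at h
  have h2 := mul_le_mul_of_nonneg_left h hθ.le
  have e : θ * (⟪W x, x⟫ - θ⁻¹ * ⟪y, x⟫ - (θ⁻¹ * ⟪y, x⟫ - θ⁻¹ * (θ⁻¹ * ⟪T y, y⟫)))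
    = θ * ⟪W x, x⟫ - 2 * ⟪y, x⟫ + θ⁻¹ * ⟪T y, y⟫ := by field_simp; ring
  linarith

theorem il_quad_le {b : ℝ}
    (H : ∀ κ > 0, ∃ δ > 0, ∀ t : ℝ, 0 < t → t < δ → t ^ 2 * b ≤ κ * t ^ 2) : b ≤ 0 := by
  refine le_of_forall_pos_le_add fun κ hκ => ?_
  obtain ⟨δ, hδ, h⟩ := H κ hκ
  have := h (δ / 2) (by positivity) (by linarith)
  have h2 : (0 : ℝ) < (δ / 2) ^ 2 := by positivity
  nlinarith

set_option maxHeartbeats 2000000 in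
theorem il_pair [FiniteDimensional ℝ E] {r : ℝ} (hr : 0 < r) (c1 c2 : E → ℝ)
    (hc1 : ContinuousOn c1 (closedBall 0 r)) (hc2 : ContinuousOn c2 (closedBall 0 r))
    (h10 : c1 0 = 0) (h20 : c2 0 = 0)
    (W T : E →L[ℝ] E) (hWs : ∀ x y, ⟪W x, y⟫ = ⟪x, W y⟫) (hTs : ∀ x y, ⟪T x, y⟫ = ⟪x, T y⟫)
    (hWT : ∀ x, W (T x) = x) (hW : ∀ x, 0 ≤ ⟪W x, x⟫)
    {τ : ℝ} (hτ0 : 0 < τ) (hτ1 : τ ≤ 1) (hT : ∀ x, τ * ‖x‖ ^ 2 ≤ ⟪T x, x⟫)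
    {θ : ℝ} (hθ0 : 0 < θ) (hθ1 : θ < 1)
    (hc : ∀ x ∈ closedBall (0 : E) r, ∀ y ∈ closedBall (0 : E) r,
      θ / 2 * ((1 / 2) * ‖x + y‖ ^ 2 + (1 / 2) * ⟪W (x - y), x - y⟫) ≤ c1 x + c2 y)
    {δ : ℝ} (hδ : 0 < δ) :
    ∃ (x0 y0 ξ η : E) (M1 M2 : E →ₗ[ℝ] E), ‖x0‖ < δ ∧ ‖y0‖ < δ ∧ ‖ξ‖ < δ ∧ ‖η‖ < δ ∧
      (∀ κ > 0, ∃ δ' > 0, ∀ h, ‖h‖ < δ' →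
        c1 x0 + ⟪ξ, h⟫ + ‖h‖ ^ 2 - (1 / 2) * ⟪M1 h, h⟫ - κ * ‖h‖ ^ 2 ≤ c1 (x0 + h)) ∧
      (∀ κ > 0, ∃ δ' > 0, ∀ h, ‖h‖ < δ' →
        c2 y0 + ⟪η, h⟫ + ‖h‖ ^ 2 - (1 / 2) * ⟪M2 h, h⟫ - κ * ‖h‖ ^ 2 ≤ c2 (y0 + h)) ∧
      (∀ h, 0 ≤ ⟪M1 h, h⟫) ∧ (∀ h, 0 ≤ ⟪M2 h, h⟫) ∧
      (∀ h k, ⟪M1 h, h⟫ + ⟪M2 k, k⟫ ≤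
        (θ⁻¹) ^ 2 * ((1 / 2) * ‖h + k‖ ^ 2 + (1 / 2) * ⟪T (h - k), h - k⟫)) := by
  have hprop : ProperSpace E := FiniteDimensional.proper ℝ E
  have hpropF : ProperSpace (WithLp 2 (E × E)) := FiniteDimensional.proper ℝ (WithLp 2 (E × E))
  have hin : ∀ ζ ξ : (WithLp 2 (E × E)), ⟪ζ, ξ⟫ = ⟪ζ.fst, ξ.fst⟫ + ⟪ζ.snd, ξ.snd⟫ := fun ζ ξ =>
    WithLp.prod_inner_apply ζ ξ
  have hnm : ∀ ζ : (WithLp 2 (E × E)), ‖ζ‖ ^ 2 = ‖ζ.fst‖ ^ 2 + ‖ζ.snd‖ ^ 2 := fun ζ => by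
    rw [← real_inner_self_eq_norm_sq, ← real_inner_self_eq_norm_sq, ← real_inner_self_eq_norm_sq,
      hin]
  have hf1 : Continuous (fun ζ : (WithLp 2 (E × E)) => ζ.fst) := by
    exact continuous_fst.comp (WithLp.prod_continuous_ofLp 2 E E)
  have hf2 : Continuous (fun ζ : (WithLp 2 (E × E)) => ζ.snd) := by
    exact continuous_snd.comp (WithLp.prod_continuous_ofLp 2 E E)
  have hn1 : ∀ ζ : (WithLp 2 (E × E)), ‖ζ.fst‖ ≤ ‖ζ‖ := fun ζ =>
    le_of_sq_le_sq (by rw [hnm]; nlinarith [sq_nonneg ‖ζ.snd‖]) (norm_nonneg _)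
  have hn2 : ∀ ζ : (WithLp 2 (E × E)), ‖ζ.snd‖ ≤ ‖ζ‖ := fun ζ =>
    le_of_sq_le_sq (by rw [hnm]; nlinarith [sq_nonneg ‖ζ.fst‖]) (norm_nonneg _)
  set K : Set (WithLp 2 (E × E)) := {ζ | ζ.fst ∈ closedBall (0 : E) r ∧ ζ.snd ∈ closedBall (0 : E) r} with hK
  have hKb : ∀ ζ ∈ K, ‖ζ‖ ≤ 2 * r := by
    rintro ζ ⟨h1, h2⟩
    rw [mem_closedBall_zero_iff] at h1 h2
    refine le_of_sq_le_sq ?_ (by positivity)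
    rw [hnm]
    nlinarith [norm_nonneg ζ.fst, norm_nonneg ζ.snd]
  have hKc : IsCompact K := by
    refine Metric.isCompact_of_isClosed_isBounded ?_ ?_
    · exact (isClosed_closedBall.preimage hf1).inter (isClosed_closedBall.preimage hf2)
    · exact (isBounded_closedBall (x := (0 : (WithLp 2 (E × E)))) (r := 2 * r)).subset
        fun ζ hζ => mem_closedBall_zero_iff.2 (hKb ζ hζ)
  have hK0 : (0 : (WithLp 2 (E × E))) ∈ K := by
    constructor <;> simp [hr.le]
  set c : (WithLp 2 (E × E)) → ℝ := fun ζ => c1 ζ.fst + c2 ζ.snd with hcdef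
  have hcc : ContinuousOn c K :=
    (hc1.comp hf1.continuousOn fun ζ hζ => hζ.1).add (hc2.comp hf2.continuousOn fun ζ hζ => hζ.2)
  have hex : ∀ ξ : (WithLp 2 (E × E)), ∃ m ∈ K, ∀ ζ ∈ K, ⟪ξ, ζ⟫ - c ζ ≤ ⟪ξ, m⟫ - c m := by
    intro ξ
    obtain ⟨m, hm, h⟩ := hKc.exists_isMaxOn ⟨0, hK0⟩
      (f := fun ζ => ⟪ξ, ζ⟫ - c ζ) (ContinuousOn.sub (by fun_prop) hcc)
    exact ⟨m, hm, fun ζ hζ => h hζ⟩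
  choose m hmK hm using hex
  set g : (WithLp 2 (E × E)) → ℝ := fun ξ => ⟪ξ, m ξ⟫ - c (m ξ) with hg
  have hs : ILSel g m := by
    intro x y
    have := hm y (m x) (hmK x)
    simp only [hg]
    rw [inner_sub_right, real_inner_comm y, real_inner_comm x]
    linarith
  have hgc : Continuous g := by
    have : LipschitzWith (2 * r).toNNReal g := by
      refine LipschitzWith.of_le_add_mul _ fun x y => ?_
      rw [Real.coe_toNNReal _ (by positivity), dist_eq_norm]
      have h1 := hs x y
      have h2 := (abs_le.1 (abs_real_inner_le_norm (m x) (y - x))).1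
      have h3 := hKb _ (hmK x)
      rw [norm_sub_rev] at h2
      have h4 : ‖m x‖ * ‖x - y‖ ≤ 2 * r * ‖x - y‖ := by gcongr
      linarith
    exact this.continuous
  have hg0 : 0 ≤ g 0 := by
    have := hm 0 0 hK0
    simp only [hg]
    simp only [hcdef, inner_zero_left, WithLp.zero_fst, WithLp.zero_snd, h10, h20] at this ⊢
    linarith
  -- the operator
  let B0 : (WithLp 2 (E × E)) →ₗ[ℝ] (WithLp 2 (E × E)) :=
    { toFun := fun ζ => WithLp.toLp 2
        ((1 / 2 : ℝ) • (ζ.fst + ζ.snd) + (1 / 2 : ℝ) • T (ζ.fst - ζ.snd),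
          (1 / 2 : ℝ) • (ζ.fst + ζ.snd) - (1 / 2 : ℝ) • T (ζ.fst - ζ.snd))
      map_add' := by
        intro x y
        have e1 : (x + y).fst = x.fst + y.fst := rfl
        have e2 : (x + y).snd = x.snd + y.snd := rfl
        rw [e1, e2, map_sub, map_sub, map_sub, map_add, map_add,
          ← WithLp.toLp_add, Prod.mk_add_mk]
        refine congrArg _ (Prod.ext ?_ ?_)
        · dsimp only; module
        · dsimp only; module
      map_smul' := by
        intro a x
        rw [RingHom.id_apply]
        have e1 : (a • x).fst = a • x.fst := rfl
        have e2 : (a • x).snd = a • x.snd := rfl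
        rw [e1, e2, map_sub, map_sub, map_smul, map_smul,
          ← WithLp.toLp_smul, Prod.smul_mk]
        refine congrArg _ (Prod.ext ?_ ?_)
        · dsimp only; module
        · dsimp only; module }
  have hB0in : ∀ x y : (WithLp 2 (E × E)), ⟪B0 x, y⟫ = (1 / 2) * ⟪x.fst + x.snd, y.fst + y.snd⟫ +
      (1 / 2) * ⟪T (x.fst - x.snd), y.fst - y.snd⟫ := by
    intro x y
    rw [hin]
    simp only [B0, LinearMap.coe_mk, AddHom.coe_mk, WithLp.toLp_fst, WithLp.toLp_snd]
    simp only [inner_add_left, inner_sub_left, inner_add_right, inner_sub_right,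
      real_inner_smul_left]
    ring
  let B : (WithLp 2 (E × E)) →L[ℝ] (WithLp 2 (E × E)) := (θ⁻¹) ^ 2 • (LinearMap.toContinuousLinearMap B0)
  have hBin : ∀ x y : (WithLp 2 (E × E)), ⟪B x, y⟫ = (θ⁻¹) ^ 2 * ((1 / 2) * ⟪x.fst + x.snd, y.fst + y.snd⟫ +
      (1 / 2) * ⟪T (x.fst - x.snd), y.fst - y.snd⟫) := by
    intro x y
    rw [← hB0in, ← real_inner_smul_left]; rfl
  have hBs : ∀ x y, ⟪B x, y⟫ = ⟪x, B y⟫ := by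
    intro x y
    have e : ⟪x, B y⟫ = ⟪B y, x⟫ := real_inner_comm _ _
    rw [e, hBin, hBin, hTs, real_inner_comm (x.fst + x.snd),
      real_inner_comm (x.fst - x.snd)]
  set q : (WithLp 2 (E × E)) → ℝ := fun x => (1 / 2) * ‖x.fst + x.snd‖ ^ 2 +
      (1 / 2) * ⟪T (x.fst - x.snd), x.fst - x.snd⟫ with hq
  have hBq : ∀ x, ⟪B x, x⟫ = (θ⁻¹) ^ 2 * q x := by
    intro x; rw [hBin, real_inner_self_eq_norm_sq]
  have hqlow : ∀ x, τ * ‖x‖ ^ 2 ≤ q x := by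
    intro x
    have h1 := hT (x.fst - x.snd)
    have h2 := norm_add_sq_real x.fst x.snd
    have h3 := norm_sub_sq_real x.fst x.snd
    have h4 : τ * ‖x.fst + x.snd‖ ^ 2 ≤ ‖x.fst + x.snd‖ ^ 2 :=
      mul_le_of_le_one_left (by positivity) hτ1
    simp only [hq]
    rw [hnm]
    nlinarith
  have hθi : 1 < θ⁻¹ := (one_lt_inv₀ hθ0).2 hθ1
  have hgq : ∀ x, g x ≤ θ⁻¹ / 2 * q x := by
    intro x
    obtain ⟨k1, k2⟩ := hmK x
    have h1 := hc _ k1 _ k2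
    have h2 := il_young W T hWs hWT hW hθ0 ((m x).fst - (m x).snd) (x.fst - x.snd)
    have h3 := il_young (ContinuousLinearMap.id ℝ E) (ContinuousLinearMap.id ℝ E)
      (fun _ _ => rfl) (fun _ => rfl) (fun x => by simp) hθ0
      ((m x).fst + (m x).snd) (x.fst + x.snd)
    simp only [ContinuousLinearMap.id_apply, real_inner_self_eq_norm_sq] at h3
    have h4 : ⟪x, m x⟫ = (1 / 2) * ⟪x.fst + x.snd, (m x).fst + (m x).snd⟫ +
        (1 / 2) * ⟪x.fst - x.snd, (m x).fst - (m x).snd⟫ := by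
      rw [hin]
      simp only [inner_add_left, inner_sub_left, inner_add_right, inner_sub_right]
      ring
    simp only [hg, hcdef, hq]
    rw [h4]
    nlinarith
  have hup : ∀ x, g x ≤ (1 / 2) * ⟪B x, x⟫ - ((θ⁻¹) ^ 2 - θ⁻¹) / 2 * τ * ‖x‖ ^ 2 := by
    intro x
    rw [hBq]
    have h1 := hgq x
    have h2 := hqlow x
    have h3 : 0 < (θ⁻¹) ^ 2 - θ⁻¹ := by nlinarith
    nlinarith
  have hη : 0 < ((θ⁻¹) ^ 2 - θ⁻¹) / 2 * τ := by
    have h3 : 0 < (θ⁻¹) ^ 2 - θ⁻¹ := by nlinarith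
    positivity
  obtain ⟨x0, M, hx0, hs0, hMd, htouch⟩ := il_jensen hs hgc hg0 B hBs hη hup
    (lt_min hδ (half_pos hr))
  have hexp := fun κ (hκ : (0 : ℝ) < κ) => il_second_order hs hMd hκ
  set ζ0 := m x0 with hζ0
  have hMpos : ∀ H : (WithLp 2 (E × E)), 0 ≤ ⟪M H, H⟫ := by
    intro H
    suffices -(⟪M H, H⟫) ≤ 0 by linarith
    refine il_quad_le fun κ hκ => ?_
    obtain ⟨d, hd, hb⟩ := hexp (κ / (2 * (‖H‖ ^ 2 + 1))) (by positivity)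
    refine ⟨d / (‖H‖ + 1), by positivity, fun t ht0 htd => ?_⟩
    rw [lt_div_iff₀ (by positivity)] at htd
    have hnt : ‖t • H‖ = t * ‖H‖ := by rw [norm_smul, Real.norm_of_nonneg ht0.le]
    have h1 := (hb (t • H) (by rw [hnt]; nlinarith)).1
    have h2 := hs x0 (x0 + t • H)
    rw [add_sub_cancel_left] at h2
    rw [hnt] at h1
    simp only [map_smul, real_inner_smul_left, real_inner_smul_right] at h1 h2
    have h3 : κ / (2 * (‖H‖ ^ 2 + 1)) * (t * ‖H‖) ^ 2 ≤ κ / 2 * t ^ 2 := by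
      have : κ / (2 * (‖H‖ ^ 2 + 1)) * (t * ‖H‖) ^ 2 =
        κ / 2 * t ^ 2 * (‖H‖ ^ 2 / (‖H‖ ^ 2 + 1)) := by field_simp
      rw [this]
      refine mul_le_of_le_one_right (by positivity) ?_
      rw [div_le_one (by positivity)]; linarith
    nlinarith
  have hjet : ∀ κ > 0, ∃ δ' > 0, ∀ H : (WithLp 2 (E × E)), ‖H‖ < δ' →
      c ζ0 + ⟪x0, H⟫ + ‖H‖ ^ 2 - (1 / 2) * ⟪M H, H⟫ - κ * ‖H‖ ^ 2 ≤ c (ζ0 + H) := by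
    intro κ hκ
    obtain ⟨d, hd, hb⟩ := hexp κ hκ
    refine ⟨min d (r / 2), by positivity, fun H hH => ?_⟩
    have h1 := (hb H (hH.trans_le (min_le_left _ _))).1
    have hmem : ζ0 + H ∈ K := by
      have : ‖ζ0 + H‖ ≤ r := by
        refine (norm_add_le _ _).trans ?_
        have e1 := hs0.trans_le (min_le_right _ _)
        have e2 := hH.trans_le (min_le_right _ _)
        linarith
      exact ⟨mem_closedBall_zero_iff.2 ((hn1 _).trans this),
        mem_closedBall_zero_iff.2 ((hn2 _).trans this)⟩
    have h2 := hm (x0 + H) (ζ0 + H) hmem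
    have h3 : g (x0 + H) = ⟪x0 + H, m (x0 + H)⟫ - c (m (x0 + H)) := rfl
    have h4 : g x0 = ⟪x0, ζ0⟫ - c ζ0 := rfl
    rw [← h3] at h2
    simp only [inner_add_left, inner_add_right] at h2
    rw [real_inner_self_eq_norm_sq, real_inner_comm ζ0 H] at h2
    rw [h4] at h1
    linarith
  have hsep : ∀ h k : E, g (x0 + WithLp.toLp 2 (h, 0)) + g (x0 + WithLp.toLp 2 (0, k)) ≤
      g (x0 + WithLp.toLp 2 (h, k)) + g x0 := by
    intro h k
    set a := m (x0 + WithLp.toLp 2 (h, 0)) with ha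
    set b := m (x0 + WithLp.toLp 2 (0, k)) with hb
    have haK : a ∈ K := hmK _
    have hbK : b ∈ K := hmK _
    have h1 := hm (x0 + WithLp.toLp 2 (h, k)) (WithLp.toLp 2 (a.fst, b.snd)) ⟨haK.1, hbK.2⟩
    have h2 := hm x0 (WithLp.toLp 2 (b.fst, a.snd)) ⟨hbK.1, haK.2⟩
    have e1 : g (x0 + WithLp.toLp 2 (h, 0)) = ⟪x0 + WithLp.toLp 2 (h, 0), a⟫ - c a := rfl
    have e2 : g (x0 + WithLp.toLp 2 (0, k)) = ⟪x0 + WithLp.toLp 2 (0, k), b⟫ - c b := rfl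
    have e3 : g (x0 + WithLp.toLp 2 (h, k)) = ⟪x0 + WithLp.toLp 2 (h, k),
      m (x0 + WithLp.toLp 2 (h, k))⟫ - c (m (x0 + WithLp.toLp 2 (h, k))) := rfl
    have e4 : g x0 = ⟪x0, m x0⟫ - c (m x0) := rfl
    rw [← e3] at h1
    rw [← e4] at h2
    rw [e1, e2]
    simp only [hin, hcdef, WithLp.add_fst, WithLp.add_snd, WithLp.toLp_fst, WithLp.toLp_snd,
      inner_add_left, inner_zero_left] at h1 h2 ⊢
    linarith
  let i1 : E →ₗ[ℝ] (WithLp 2 (E × E)) :=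
    { toFun := fun h => WithLp.toLp 2 (h, 0)
      map_add' := fun x y => by rw [← WithLp.toLp_add, Prod.mk_add_mk, add_zero]
      map_smul' := fun a x => by
        rw [RingHom.id_apply, ← WithLp.toLp_smul, Prod.smul_mk, smul_zero] }
  let i2 : E →ₗ[ℝ] (WithLp 2 (E × E)) :=
    { toFun := fun h => WithLp.toLp 2 (0, h)
      map_add' := fun x y => by rw [← WithLp.toLp_add, Prod.mk_add_mk, add_zero]
      map_smul' := fun a x => by
        rw [RingHom.id_apply, ← WithLp.toLp_smul, Prod.smul_mk, smul_zero] }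
  let M1 : E →ₗ[ℝ] E := (WithLp.fstₗ 2 ℝ E E) ∘ₗ (M : (WithLp 2 (E × E)) →ₗ[ℝ] (WithLp 2 (E × E))) ∘ₗ i1
  let M2 : E →ₗ[ℝ] E := (WithLp.sndₗ 2 ℝ E E) ∘ₗ (M : (WithLp 2 (E × E)) →ₗ[ℝ] (WithLp 2 (E × E))) ∘ₗ i2
  have hM1 : ∀ h, ⟪M1 h, h⟫ = ⟪M (WithLp.toLp 2 (h, 0)), WithLp.toLp 2 (h, 0)⟫ := by
    intro h; rw [hin]; simp only [WithLp.toLp_fst, WithLp.toLp_snd, inner_zero_right, add_zero]; rfl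
  have hM2 : ∀ h, ⟪M2 h, h⟫ = ⟪M (WithLp.toLp 2 (0, h)), WithLp.toLp 2 (0, h)⟫ := by
    intro h; rw [hin]; simp only [WithLp.toLp_fst, WithLp.toLp_snd, inner_zero_right, zero_add]; rfl
  have hi1 : ∀ h : E, ‖(WithLp.toLp 2 (h, 0) : (WithLp 2 (E × E)))‖ = ‖h‖ := fun h => by
    have := hnm (WithLp.toLp 2 (h, 0))
    simp only [WithLp.toLp_fst, WithLp.toLp_snd, norm_zero] at this
    rw [← abs_of_nonneg (norm_nonneg h), ← abs_of_nonneg (norm_nonneg (WithLp.toLp 2 (h, 0) : (WithLp 2 (E × E)))),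
      ← sq_eq_sq_iff_abs_eq_abs, this]
    simp
  have hi2 : ∀ h : E, ‖(WithLp.toLp 2 (0, h) : (WithLp 2 (E × E)))‖ = ‖h‖ := fun h => by
    have := hnm (WithLp.toLp 2 (0, h))
    simp only [WithLp.toLp_fst, WithLp.toLp_snd, norm_zero] at this
    rw [← abs_of_nonneg (norm_nonneg h), ← abs_of_nonneg (norm_nonneg (WithLp.toLp 2 (0, h) : (WithLp 2 (E × E)))),
      ← sq_eq_sq_iff_abs_eq_abs, this]
    simp
  have hx0' := hx0.trans_le (min_le_left _ _)
  have hs0' := hs0.trans_le (min_le_left _ _)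
  refine ⟨ζ0.fst, ζ0.snd, x0.fst, x0.snd, M1, M2, (hn1 _).trans_lt hs0', (hn2 _).trans_lt hs0',
    (hn1 _).trans_lt hx0', (hn2 _).trans_lt hx0', ?_, ?_, ?_, ?_, ?_⟩
  · intro κ hκ
    obtain ⟨d, hd, hb⟩ := hjet κ hκ
    refine ⟨d, hd, fun h hh => ?_⟩
    have := hb (WithLp.toLp 2 (h, 0)) (by rw [hi1]; exact hh)
    rw [← hM1, hi1, hin] at this
    simp only [hcdef, WithLp.add_fst, WithLp.add_snd, WithLp.toLp_fst, WithLp.toLp_snd,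
      inner_zero_right, add_zero] at this
    linarith
  · intro κ hκ
    obtain ⟨d, hd, hb⟩ := hjet κ hκ
    refine ⟨d, hd, fun h hh => ?_⟩
    have := hb (WithLp.toLp 2 (0, h)) (by rw [hi2]; exact hh)
    rw [← hM2, hi2, hin] at this
    simp only [hcdef, WithLp.add_fst, WithLp.add_snd, WithLp.toLp_fst, WithLp.toLp_snd,
      inner_zero_right, add_zero, zero_add] at this
    linarith
  · intro h; rw [hM1]; exact hMpos _
  · intro h; rw [hM2]; exact hMpos _
  · intro h k
    suffices ⟪M1 h, h⟫ + ⟪M2 k, k⟫ -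
        (θ⁻¹) ^ 2 * ((1 / 2) * ‖h + k‖ ^ 2 + (1 / 2) * ⟪T (h - k), h - k⟫) ≤ 0 by linarith
    refine il_quad_le fun κ hκ => ?_
    set R := ‖h‖ + ‖k‖ + 1 with hR
    have hRpos : 0 < R := by positivity
    obtain ⟨d, hd, hb⟩ := hexp (κ / (4 * R ^ 2)) (by positivity)
    refine ⟨d / R, by positivity, fun t ht0 htd => ?_⟩
    rw [lt_div_iff₀ (by positivity)] at htd
    have hh : ‖t • h‖ = t * ‖h‖ := by rw [norm_smul, Real.norm_of_nonneg ht0.le]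
    have hk : ‖t • k‖ = t * ‖k‖ := by rw [norm_smul, Real.norm_of_nonneg ht0.le]
    have hhR : t * ‖h‖ ≤ t * R := by
      gcongr; rw [hR]; linarith [norm_nonneg k]
    have hkR : t * ‖k‖ ≤ t * R := by
      gcongr; rw [hR]; linarith [norm_nonneg h]
    have h1 := (hb (WithLp.toLp 2 (t • h, 0)) (by rw [hi1, hh]; linarith)).2
    have h2 := (hb (WithLp.toLp 2 (0, t • k)) (by rw [hi2, hk]; linarith)).2
    have h3 := hsep (t • h) (t • k)
    have h4 := htouch (WithLp.toLp 2 (t • h, t • k))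
    rw [← hM1, hi1, hh, map_smul, real_inner_smul_left, real_inner_smul_right] at h1
    rw [← hM2, hi2, hk, map_smul, real_inner_smul_left, real_inner_smul_right] at h2
    rw [hBq] at h4
    have e1 : q (WithLp.toLp 2 (t • h, t • k)) = t ^ 2 *
        ((1 / 2) * ‖h + k‖ ^ 2 + (1 / 2) * ⟪T (h - k), h - k⟫) := by
      simp only [hq, WithLp.toLp_fst, WithLp.toLp_snd]
      rw [← smul_add, ← smul_sub, norm_smul, map_smul, real_inner_smul_left,
        real_inner_smul_right, Real.norm_of_nonneg ht0.le]
      ring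
    rw [e1] at h4
    rw [hin] at h1 h2 h4
    simp only [WithLp.toLp_fst, WithLp.toLp_snd, inner_zero_right, add_zero, zero_add] at h1 h2 h4
    have h5 : κ / (4 * R ^ 2) * (t * ‖h‖) ^ 2 ≤ κ / 4 * t ^ 2 := by
      calc _ ≤ κ / (4 * R ^ 2) * (t * R) ^ 2 := by gcongr
        _ = _ := by field_simp
    have h6 : κ / (4 * R ^ 2) * (t * ‖k‖) ^ 2 ≤ κ / 4 * t ^ 2 := by
      calc _ ≤ κ / (4 * R ^ 2) * (t * R) ^ 2 := by gcongr
        _ = _ := by field_simp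
    have h7 : t ^ 2 * (⟪M1 h, h⟫ + ⟪M2 k, k⟫ -
        (θ⁻¹) ^ 2 * ((1 / 2) * ‖h + k‖ ^ 2 + (1 / 2) * ⟪T (h - k), h - k⟫)) =
        t * (t * ⟪M1 h, h⟫) + t * (t * ⟪M2 k, k⟫) - (θ⁻¹) ^ 2 * (t ^ 2 *
        ((1 / 2) * ‖h + k‖ ^ 2 + (1 / 2) * ⟪T (h - k), h - k⟫)) := by ring
    rw [h7]
    linarith

end Pair
section Concrete

theorem il_taylor {E : Type*} [NormedAddCommGroup E] [NormedSpace ℝ E] {φ : E → ℝ}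
    (hφ : ContDiff ℝ 2 φ) (x0 : E) {κ : ℝ} (hκ : 0 < κ) :
    ∃ δ > 0, ∀ d : E, ‖d‖ < δ → φ (x0 + d) ≤ φ x0 + fderiv ℝ φ x0 d +
      (1 / 2) * fderiv ℝ (fderiv ℝ φ) x0 d d + κ * ‖d‖ ^ 2 := by
  have hφ1 : Differentiable ℝ φ := hφ.differentiable (by norm_num)
  have hφ2 : Differentiable ℝ (fderiv ℝ φ) :=
    (hφ.fderiv_right (m := 1) (by norm_num)).differentiable (by norm_num)
  have h1 := hasFDerivAt_iff_isLittleO_nhds_zero.1 (hφ2 x0).hasFDerivAt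
  have h2 := h1.def hκ
  obtain ⟨δ, hδ, h3⟩ := Metric.eventually_nhds_iff.1 h2
  refine ⟨δ, hδ, fun d hd => ?_⟩
  have hder : ∀ t : ℝ, HasDerivAt (fun t : ℝ => φ (x0 + t • d) - t * fderiv ℝ φ x0 d -
      (t ^ 2 / 2) * fderiv ℝ (fderiv ℝ φ) x0 d d)
      (fderiv ℝ φ (x0 + t • d) d - fderiv ℝ φ x0 d - t * fderiv ℝ (fderiv ℝ φ) x0 d d) t := by
    intro t
    have e1 : HasDerivAt (fun t : ℝ => x0 + t • d) d t := by
      simpa using ((hasDerivAt_id t).smul_const d).const_add x0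
    have e2 := (hφ1 (x0 + t • d)).hasFDerivAt.comp_hasDerivAt t e1
    have e3 : HasDerivAt (fun t : ℝ => t * fderiv ℝ φ x0 d) (fderiv ℝ φ x0 d) t := by
      simpa using (hasDerivAt_id t).mul_const (fderiv ℝ φ x0 d)
    have e4 : HasDerivAt (fun t : ℝ => (t ^ 2 / 2) * fderiv ℝ (fderiv ℝ φ) x0 d d)
        (t * fderiv ℝ (fderiv ℝ φ) x0 d d) t := by
      have := (((hasDerivAt_id t).pow 2).div_const 2).mul_const (fderiv ℝ (fderiv ℝ φ) x0 d d)
      refine this.congr_deriv ?_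
      simp
    exact (e2.sub e3).sub e4
  obtain ⟨c, hc, hslope⟩ := exists_hasDerivAt_eq_slope _ _ (zero_lt_one (α := ℝ))
    (fun t _ => (hder t).continuousAt.continuousWithinAt) (fun t _ => hder t)
  have hcd : ‖c • d‖ ≤ ‖d‖ := by
    rw [norm_smul, Real.norm_of_nonneg hc.1.le]
    exact mul_le_of_le_one_left (norm_nonneg _) hc.2.le
  have h4 := h3 (y := c • d) (by rw [dist_zero_right]; linarith)
  have h5 : fderiv ℝ φ (x0 + c • d) d - fderiv ℝ φ x0 d - c * fderiv ℝ (fderiv ℝ φ) x0 d d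
      ≤ κ * ‖d‖ ^ 2 := by
    have := (ContinuousLinearMap.le_opNorm (fderiv ℝ φ (x0 + c • d) - fderiv ℝ φ x0 -
      fderiv ℝ (fderiv ℝ φ) x0 (c • d)) d)
    have h6 := (le_abs_self _).trans this
    simp only [sub_apply, map_smul, smul_apply,
      smul_eq_mul] at h6 h4
    refine h6.trans ?_
    calc _ ≤ κ * ‖c • d‖ * ‖d‖ := by gcongr
      _ ≤ κ * ‖d‖ * ‖d‖ := by gcongr
      _ = _ := by ring
  rw [hslope] at h5
  simp only [one_smul, zero_smul, add_zero] at h5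
  norm_num at h5
  linarith

variable {n : ℕ}

theorem il_sum_single (d : EuclideanSpace ℝ (Fin n)) :
    d = ∑ i, d i • EuclideanSpace.single i (1 : ℝ) := by
  have := (EuclideanSpace.basisFun (Fin n) ℝ).sum_repr d
  simpa using this.symm

theorem il_quad_bilin (b : EuclideanSpace ℝ (Fin n) →L[ℝ] EuclideanSpace ℝ (Fin n) →L[ℝ] ℝ)
    (d : EuclideanSpace ℝ (Fin n)) :
    quadForm (Matrix.of fun i j => b (EuclideanSpace.single i 1) (EuclideanSpace.single j 1)) d
      = b d d := by
  conv_rhs => rw [il_sum_single d]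
  simp only [quadForm, map_sum, map_smul, sum_apply,
    smul_apply, smul_eq_mul, Matrix.of_apply]
  rw [Finset.sum_comm]
  refine Finset.sum_congr rfl fun i _ => ?_
  rw [Finset.mul_sum]
  refine Finset.sum_congr rfl fun j _ => ?_
  ring

theorem il_quad_hess (φ : EuclideanSpace ℝ (Fin n) → ℝ) (x d : EuclideanSpace ℝ (Fin n)) :
    quadForm (hessianMatrix φ x) d = fderiv ℝ (fderiv ℝ φ) x d d := by
  rw [← il_quad_bilin]
  congr 1
  ext i j
  simp [hessianMatrix, iteratedFDeriv_two_apply]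

theorem il_inner_mat (A : Matrix (Fin n) (Fin n) ℝ) (x y : EuclideanSpace ℝ (Fin n)) :
    ⟪Matrix.toEuclideanCLM (𝕜 := ℝ) A x, y⟫ = ∑ i, ∑ j, A i j * x j * y i := by
  rw [EuclideanSpace.inner_eq_star_dotProduct, Matrix.ofLp_toEuclideanCLM]
  simp only [dotProduct, Matrix.mulVec, Pi.star_apply, star_trivial, Finset.mul_sum]
  refine Finset.sum_congr rfl fun i _ => Finset.sum_congr rfl fun j _ => ?_
  ring

theorem il_inner_quad (A : Matrix (Fin n) (Fin n) ℝ) (x : EuclideanSpace ℝ (Fin n)) :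
    ⟪Matrix.toEuclideanCLM (𝕜 := ℝ) A x, x⟫ = quadForm A x := il_inner_mat A x x

theorem il_mat_symm {A : Matrix (Fin n) (Fin n) ℝ} (hA : A.IsHermitian)
    (x y : EuclideanSpace ℝ (Fin n)) :
    ⟪Matrix.toEuclideanCLM (𝕜 := ℝ) A x, y⟫ = ⟪x, Matrix.toEuclideanCLM (𝕜 := ℝ) A y⟫ := by
  have e : ⟪x, Matrix.toEuclideanCLM (𝕜 := ℝ) A y⟫ = ⟪Matrix.toEuclideanCLM (𝕜 := ℝ) A y, x⟫ :=
    real_inner_comm _ _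
  rw [e, il_inner_mat, il_inner_mat, Finset.sum_comm]
  refine Finset.sum_congr rfl fun i _ => Finset.sum_congr rfl fun j _ => ?_
  have := hA.apply i j
  simp only [star_trivial] at this
  rw [this]; ring

theorem il_quad_dot (A : Matrix (Fin n) (Fin n) ℝ) (x : Fin n → ℝ) :
    quadForm A (WithLp.toLp 2 x) = x ⬝ᵥ (A.mulVec x) := by
  simp only [dotProduct, Matrix.mulVec, quadForm, Finset.mul_sum]
  refine Finset.sum_congr rfl fun i _ => Finset.sum_congr rfl fun j _ => ?_
  ring

theorem il_posDef_lower {A : Matrix (Fin n) (Fin n) ℝ} (hA : A.PosDef) :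
    ∃ w > 0, w ≤ 1 ∧ ∀ x, w * ‖x‖ ^ 2 ≤ quadForm A x := by
  have hcont : Continuous (quadForm A) := by
    unfold quadForm; fun_prop
  have hsmul : ∀ (t : ℝ) x, quadForm A (t • x) = t ^ 2 * quadForm A x := by
    intro t x
    simp only [quadForm, PiLp.smul_apply, smul_eq_mul, Finset.mul_sum]
    refine Finset.sum_congr rfl fun i _ => Finset.sum_congr rfl fun j _ => ?_
    ring
  have hpos : ∀ x : EuclideanSpace ℝ (Fin n), x ≠ 0 → 0 < quadForm A x := by
    intro x hx
    have := hA.dotProduct_mulVec_pos (x := x.ofLp) (by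
      intro h; apply hx; ext i; simp [h])
    rw [star_trivial, ← il_quad_dot] at this
    exact this
  rcases (sphere (0 : EuclideanSpace ℝ (Fin n)) 1).eq_empty_or_nonempty with h | h
  · refine ⟨1, one_pos, le_rfl, fun x => ?_⟩
    have hx : x = 0 := by
      by_contra hx
      have : (‖x‖⁻¹ • x) ∈ sphere (0 : EuclideanSpace ℝ (Fin n)) 1 := by
        rw [mem_sphere_zero_iff_norm, norm_smul, norm_inv, norm_norm]
        exact inv_mul_cancel₀ (norm_ne_zero_iff.2 hx)
      rw [h] at this; exact this
    subst hx
    have := hsmul 0 0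
    simp at this
    simp [this]
  · obtain ⟨m, hm, hmin⟩ := (isCompact_sphere _ _).exists_isMinOn h hcont.continuousOn
    have hm0 : m ≠ 0 := by rintro rfl; simp at hm
    refine ⟨min 1 (quadForm A m), lt_min one_pos (hpos m hm0), min_le_left _ _, fun x => ?_⟩
    rcases eq_or_ne x 0 with rfl | hx
    · have := hsmul 0 0
      simp at this
      simp [this]
    · have hx' : ‖x‖ ≠ 0 := norm_ne_zero_iff.2 hx
      have h1 : (‖x‖⁻¹ • x) ∈ sphere (0 : EuclideanSpace ℝ (Fin n)) 1 := by
        rw [mem_sphere_zero_iff_norm, norm_smul, norm_inv, norm_norm]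
        exact inv_mul_cancel₀ hx'
      have h2 : quadForm A m ≤ quadForm A (‖x‖⁻¹ • x) := hmin h1
      have h3 : quadForm A x = ‖x‖ ^ 2 * quadForm A (‖x‖⁻¹ • x) := by
        rw [hsmul]; field_simp
      rw [h3, mul_comm]
      gcongr
      exact (min_le_right _ _).trans h2

theorem il_quad_mat (M : EuclideanSpace ℝ (Fin n) →ₗ[ℝ] EuclideanSpace ℝ (Fin n)) :
    ∃ X : Matrix (Fin n) (Fin n) ℝ, X.IsHermitian ∧ ∀ h, quadForm X h = ⟪M h, h⟫ := by
  set A : Matrix (Fin n) (Fin n) ℝ := Matrix.of fun i j =>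
    ⟪M (EuclideanSpace.single j 1), EuclideanSpace.single i (1 : ℝ)⟫ with hA
  have hAq : ∀ h, quadForm A h = ⟪M h, h⟫ := by
    intro h
    conv_rhs => rw [il_sum_single h]
    simp only [quadForm, map_sum, map_smul, sum_inner, inner_sum, real_inner_smul_left,
      real_inner_smul_right, hA, Matrix.of_apply]
    refine Finset.sum_congr rfl fun i _ => Finset.sum_congr rfl fun j _ => ?_
    ring
  have hAt : ∀ h, quadForm A.transpose h = quadForm A h := by
    intro h
    simp only [quadForm, Matrix.transpose_apply]
    rw [Finset.sum_comm]
    refine Finset.sum_congr rfl fun i _ => Finset.sum_congr rfl fun j _ => ?_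
    ring
  refine ⟨(1 / 2 : ℝ) • (A + A.transpose), ?_, fun h => ?_⟩
  · ext i j
    simp only [Matrix.conjTranspose_apply, Matrix.smul_apply, Matrix.add_apply,
      Matrix.transpose_apply, star_trivial, smul_eq_mul]
    ring
  · have : quadForm ((1 / 2 : ℝ) • (A + A.transpose)) h =
        (1 / 2) * (quadForm A h + quadForm A.transpose h) := by
      simp only [quadForm, Matrix.smul_apply, Matrix.add_apply, smul_eq_mul, Finset.mul_sum,
        ← Finset.sum_add_distrib]
      refine Finset.sum_congr rfl fun i _ => Finset.sum_congr rfl fun j _ => ?_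
      ring
    rw [this, hAt, hAq]; ring

theorem il_quad_W (Z : Matrix (Fin n) (Fin n) ℝ) (ε : ℝ) (d : EuclideanSpace ℝ (Fin n)) :
    quadForm ((1 : Matrix (Fin n) (Fin n) ℝ) - ε • Z) d = ‖d‖ ^ 2 - ε * quadForm Z d := by
  rw [← il_inner_quad, ← il_inner_quad, map_sub, map_smul, map_one, sub_apply,
    smul_apply, inner_sub_left, real_inner_smul_left, ContinuousLinearMap.one_apply,
    real_inner_self_eq_norm_sq]

set_option maxHeartbeats 1000000 in
theorem il_step (Ω : Set (EuclideanSpace ℝ (Fin n))) (hΩ : IsOpen Ω)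
    (u v : EuclideanSpace ℝ (Fin n) → ℝ) (hu : ContinuousOn u Ω) (hv : ContinuousOn v Ω)
    (φ : EuclideanSpace ℝ (Fin n) → ℝ) (hφ : ContDiff ℝ 2 φ)
    (xb yb : EuclideanSpace ℝ (Fin n)) (hxb : xb ∈ Ω) (hyb : yb ∈ Ω)
    (hmax : IsLocalMaxOn
      (fun t : EuclideanSpace ℝ (Fin n) × EuclideanSpace ℝ (Fin n) =>
        u t.1 - v t.2 - φ (t.1 - t.2)) (Ω ×ˢ Ω) (xb, yb))
    (ε : ℝ) (hε : 0 < ε)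
    (hεZ : ((1 : Matrix (Fin n) (Fin n) ℝ) - ε • hessianMatrix φ (xb - yb)).PosDef)
    {θ : ℝ} (hθ0 : 0 < θ) (hθ1 : θ < 1) {δ : ℝ} (hδ : 0 < δ) :
    ∃ (x y p q : EuclideanSpace ℝ (Fin n)) (X Y : Matrix (Fin n) (Fin n) ℝ),
      X.IsHermitian ∧ Y.IsHermitian ∧ x ∈ Ω ∧ y ∈ Ω ∧ ‖x - xb‖ < δ ∧ ‖y - yb‖ < δ ∧
      ‖p - gradient φ (xb - yb)‖ < δ ∧ ‖q - gradient φ (xb - yb)‖ < δ ∧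
      InSuperJet Ω u x p X ∧ InSubJet Ω v y q Y ∧
      (∀ h, -(2 / ε) * ‖h‖ ^ 2 ≤ quadForm X h) ∧ (∀ h, quadForm Y h ≤ 2 / ε * ‖h‖ ^ 2) ∧
      (∀ h k, quadForm X h - quadForm Y k ≤ 2 / ε * ((θ⁻¹) ^ 2 * ((1 / 2) * ‖h + k‖ ^ 2 +
        (1 / 2) * quadForm ((1 - ε • hessianMatrix φ (xb - yb))⁻¹) (h - k)) -
        ‖h‖ ^ 2 - ‖k‖ ^ 2)) := by
  set z := gradient φ (xb - yb) with hz
  set Z := hessianMatrix φ (xb - yb) with hZ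
  set Wm : Matrix (Fin n) (Fin n) ℝ := 1 - ε • Z with hWm
  have hWq : ∀ d, quadForm Wm d = ‖d‖ ^ 2 - ε * quadForm Z d := il_quad_W Z ε
  obtain ⟨w, hw0, -, hw⟩ := il_posDef_lower hεZ
  obtain ⟨τ, hτ0, hτ1, hτ⟩ := il_posDef_lower hεZ.inv
  have hκ : 0 < (1 - θ) * w / (2 * ε) := by
    have : 0 < 1 - θ := by linarith
    positivity
  obtain ⟨δT, hδT, htay⟩ := il_taylor hφ (xb - yb) hκ
  have hnh : Ω ×ˢ Ω ∈ 𝓝 (xb, yb) := (hΩ.prod hΩ).mem_nhds ⟨hxb, hyb⟩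
  have hev : ∀ᶠ t in 𝓝 (xb, yb), t ∈ Ω ×ˢ Ω ∧
      u t.1 - v t.2 - φ (t.1 - t.2) ≤ u xb - v yb - φ (xb - yb) := by
    have h1 := hmax
    rw [IsLocalMaxOn, IsMaxFilter, nhdsWithin_eq_nhds.2 hnh] at h1
    exact Filter.Eventually.and hnh h1
  obtain ⟨ρ, hρ, hball⟩ := Metric.eventually_nhds_iff.1 hev
  set r := min (ρ / 2) (δT / 3) with hr
  have hr0 : 0 < r := by positivity
  have hrρ : r < ρ := (min_le_left _ _).trans_lt (by linarith)
  have hrT : r ≤ δT / 3 := min_le_right _ _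
  have hpt : ∀ x y : EuclideanSpace ℝ (Fin n), ‖x‖ ≤ r → ‖y‖ ≤ r →
      (xb + x ∈ Ω ∧ yb + y ∈ Ω) ∧
      u (xb + x) - v (yb + y) - φ (xb + x - (yb + y)) ≤ u xb - v yb - φ (xb - yb) := by
    intro x y hx hy
    have := hball (y := (xb + x, yb + y)) (by
      rw [Prod.dist_eq, dist_self_add_left, dist_self_add_left]
      exact max_lt (by linarith) (by linarith))
    exact ⟨⟨this.1.1, this.1.2⟩, this.2⟩
  set c1 : EuclideanSpace ℝ (Fin n) → ℝ :=
    fun x => (1 / 2) * ‖x‖ ^ 2 - ε / 2 * (u (xb + x) - u xb - ⟪z, x⟫) with hc1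
  set c2 : EuclideanSpace ℝ (Fin n) → ℝ :=
    fun y => (1 / 2) * ‖y‖ ^ 2 + ε / 2 * (v (yb + y) - v yb - ⟪z, y⟫) with hc2
  have hcc1 : ContinuousOn c1 (closedBall 0 r) := by
    have : ContinuousOn (fun x => u (xb + x)) (closedBall 0 r) :=
      hu.comp (by fun_prop) fun x hx =>
        (hpt x 0 (mem_closedBall_zero_iff.1 hx) (by simp [hr0.le])).1.1
    have e1 : ContinuousOn (fun x : EuclideanSpace ℝ (Fin n) => (1 / 2) * ‖x‖ ^ 2)
        (closedBall 0 r) := by fun_prop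
    have e2 : ContinuousOn (fun x : EuclideanSpace ℝ (Fin n) => ⟪z, x⟫)
        (closedBall 0 r) := by fun_prop
    exact e1.sub (continuousOn_const.mul ((this.sub continuousOn_const).sub e2))
  have hcc2 : ContinuousOn c2 (closedBall 0 r) := by
    have : ContinuousOn (fun x => v (yb + x)) (closedBall 0 r) :=
      hv.comp (by fun_prop) fun x hx =>
        (hpt 0 x (by simp [hr0.le]) (mem_closedBall_zero_iff.1 hx)).1.2
    have e1 : ContinuousOn (fun x : EuclideanSpace ℝ (Fin n) => (1 / 2) * ‖x‖ ^ 2)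
        (closedBall 0 r) := by fun_prop
    have e2 : ContinuousOn (fun x : EuclideanSpace ℝ (Fin n) => ⟪z, x⟫)
        (closedBall 0 r) := by fun_prop
    exact e1.add (continuousOn_const.mul ((this.sub continuousOn_const).sub e2))
  set W := Matrix.toEuclideanCLM (𝕜 := ℝ) Wm with hW
  set T := Matrix.toEuclideanCLM (𝕜 := ℝ) Wm⁻¹ with hT
  have hWT : ∀ x, W (T x) = x := by
    intro x
    have h1 : Wm * Wm⁻¹ = 1 := Matrix.mul_nonsing_inv _ ((Matrix.isUnit_iff_isUnit_det _).1 hεZ.isUnit)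
    have h2 : W * T = 1 := by rw [hW, hT, ← map_mul, h1, map_one]
    rw [← mul_apply_eq_comp, h2]; rfl
  have hcq : ∀ x ∈ closedBall (0 : EuclideanSpace ℝ (Fin n)) r, ∀ y ∈ closedBall 0 r,
      θ / 2 * ((1 / 2) * ‖x + y‖ ^ 2 + (1 / 2) * ⟪W (x - y), x - y⟫) ≤ c1 x + c2 y := by
    intro x hx y hy
    rw [mem_closedBall_zero_iff] at hx hy
    have h1 := (hpt x y hx hy).2
    have h2 := htay (x - y) ((norm_sub_le _ _).trans_lt (by linarith))
    rw [← il_quad_hess, ← inner_gradient_left, ← hz, ← hZ, inner_sub_right] at h2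
    have e : xb - yb + (x - y) = xb + x - (yb + y) := by abel
    rw [e] at h2
    have h3 := hw (x - y)
    rw [il_inner_quad]
    have h4 := hWq (x - y)
    have h5 := norm_add_sq_real x y
    have h6 := norm_sub_sq_real x y
    have h7 : ε / 2 * (u (xb + x) - u xb - ⟪z, x⟫ - (v (yb + y) - v yb - ⟪z, y⟫)) ≤
        ε / 2 * ((1 / 2) * quadForm Z (x - y) + (1 - θ) * w / (2 * ε) * ‖x - y‖ ^ 2) := by
      gcongr; linarith
    have h8 : ε / 2 * ((1 / 2) * quadForm Z (x - y) + (1 - θ) * w / (2 * ε) * ‖x - y‖ ^ 2) =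
        1 / 4 * (ε * quadForm Z (x - y)) + (1 - θ) / 4 * (w * ‖x - y‖ ^ 2) := by
      field_simp
      ring
    have h9 : (1 - θ) / 4 * (w * ‖x - y‖ ^ 2) ≤ (1 - θ) / 4 * quadForm Wm (x - y) :=
      mul_le_mul_of_nonneg_left h3 (by linarith)
    have h10 : θ / 4 * ‖x + y‖ ^ 2 ≤ 1 / 4 * ‖x + y‖ ^ 2 := by gcongr
    simp only [hc1, hc2]
    linarith
  have hδ1 : 0 < min (min δ (δ * ε / 4)) r := by positivity
  obtain ⟨x0, y0, ξ, η, M1, M2, hx0, hy0, hξ, hη, hj1, hj2, hM1, hM2, hM12⟩ :=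
    il_pair hr0 c1 c2 hcc1 hcc2 (by simp [hc1]) (by simp [hc2]) W T
      (il_mat_symm hεZ.isHermitian) (il_mat_symm hεZ.inv.isHermitian) hWT
      (fun x => by
        rw [il_inner_quad]; exact (by positivity : 0 ≤ w * ‖x‖ ^ 2).trans (hw x))
      hτ0 hτ1 (fun x => by rw [il_inner_quad]; exact hτ x) hθ0 hθ1 hcq hδ1
  simp only [lt_min_iff] at hx0 hy0 hξ hη
  obtain ⟨X, hXs, hX⟩ := il_quad_mat ((2 / ε) • (M1 - LinearMap.id))
  obtain ⟨Y, hYs, hY⟩ := il_quad_mat (-(2 / ε) • (M2 - LinearMap.id))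
  have hX' : ∀ h, quadForm X h = 2 / ε * (⟪M1 h, h⟫ - ‖h‖ ^ 2) := fun h => by
    rw [hX, LinearMap.smul_apply, real_inner_smul_left, LinearMap.sub_apply, inner_sub_left,
      LinearMap.id_apply, real_inner_self_eq_norm_sq]
  have hY' : ∀ h, quadForm Y h = -(2 / ε) * (⟪M2 h, h⟫ - ‖h‖ ^ 2) := fun h => by
    rw [hY, LinearMap.smul_apply, real_inner_smul_left, LinearMap.sub_apply, inner_sub_left,
      LinearMap.id_apply, real_inner_self_eq_norm_sq]
  have hmem := (hpt x0 y0 hx0.2.le hy0.2.le).1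
  have hsm : ∀ a b : EuclideanSpace ℝ (Fin n), ‖a‖ < δ * ε / 4 → ‖b‖ < δ * ε / 4 →
      ‖(2 / ε) • (a - b)‖ < δ := by
    intro a b ha hb
    rw [norm_smul, Real.norm_of_nonneg (by positivity)]
    calc 2 / ε * ‖a - b‖ < 2 / ε * (δ * ε / 2) := by
          gcongr
          exact (norm_sub_le _ _).trans_lt (by linarith)
      _ = δ := by field_simp
  have h2ε : 0 < 2 / ε := by positivity
  refine ⟨xb + x0, yb + y0, z + (2 / ε) • (x0 - ξ), z + (2 / ε) • (η - y0), X, Y, hXs, hYs,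
    hmem.1, hmem.2, ?_, ?_, ?_, ?_, ?_, ?_, ?_, ?_, ?_⟩
  · rw [add_sub_cancel_left]; exact hx0.1.1
  · rw [add_sub_cancel_left]; exact hy0.1.1
  · rw [add_sub_cancel_left]; exact hsm _ _ hx0.1.2 hξ.1.2
  · rw [add_sub_cancel_left]; exact hsm _ _ hη.1.2 hy0.1.2
  · intro e he
    obtain ⟨d, hd, hb⟩ := hj1 (ε / 2 * e) (by positivity)
    refine ⟨d, hd, fun h _ hh => ?_⟩
    have h1 := hb h hh
    simp only [hc1] at h1
    rw [norm_add_sq_real, inner_add_right] at h1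
    rw [hX', inner_add_left, real_inner_smul_left, inner_sub_left, add_assoc xb]
    have h2 : ε / 2 * (u (xb + (x0 + h))) ≤ ε / 2 * (u (xb + x0)) + ε / 2 * ⟪z, h⟫ +
      ⟪x0, h⟫ - ⟪ξ, h⟫ + (1 / 2) * (⟪M1 h, h⟫ - ‖h‖ ^ 2) + ε / 2 * e * ‖h‖ ^ 2 := by linarith
    have h3 := mul_le_mul_of_nonneg_left h2 h2ε.le
    have e1 : ∀ a, 2 / ε * (ε / 2 * a) = a := fun a => by field_simp
    have e2 : 2 / ε * (ε / 2 * (u (xb + x0)) + ε / 2 * ⟪z, h⟫ +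
      ⟪x0, h⟫ - ⟪ξ, h⟫ + (1 / 2) * (⟪M1 h, h⟫ - ‖h‖ ^ 2) + ε / 2 * e * ‖h‖ ^ 2) =
      u (xb + x0) + (⟪z, h⟫ + 2 / ε * (⟪x0, h⟫ - ⟪ξ, h⟫)) +
        1 / 2 * (2 / ε * (⟪M1 h, h⟫ - ‖h‖ ^ 2)) + e * ‖h‖ ^ 2 := by field_simp; ring
    rw [e1, e2] at h3
    exact h3
  · intro e he
    obtain ⟨d, hd, hb⟩ := hj2 (ε / 2 * e) (by positivity)
    refine ⟨d, hd, fun h _ hh => ?_⟩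
    have h1 := hb h hh
    simp only [hc2] at h1
    rw [norm_add_sq_real, inner_add_right] at h1
    rw [hY', inner_add_left, real_inner_smul_left, inner_sub_left, add_assoc yb]
    have h2 : ε / 2 * (v (yb + y0)) + ε / 2 * ⟪z, h⟫ + ⟪η, h⟫ - ⟪y0, h⟫ -
      (1 / 2) * (⟪M2 h, h⟫ - ‖h‖ ^ 2) - ε / 2 * e * ‖h‖ ^ 2 ≤ ε / 2 * (v (yb + (y0 + h))) := by
      linarith
    have h3 := mul_le_mul_of_nonneg_left h2 h2ε.le
    have e1 : ∀ a, 2 / ε * (ε / 2 * a) = a := fun a => by field_simp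
    have e2 : 2 / ε * (ε / 2 * (v (yb + y0)) + ε / 2 * ⟪z, h⟫ + ⟪η, h⟫ - ⟪y0, h⟫ -
      (1 / 2) * (⟪M2 h, h⟫ - ‖h‖ ^ 2) - ε / 2 * e * ‖h‖ ^ 2) =
      v (yb + y0) + (⟪z, h⟫ + 2 / ε * (⟪η, h⟫ - ⟪y0, h⟫)) +
        1 / 2 * (-(2 / ε) * (⟪M2 h, h⟫ - ‖h‖ ^ 2)) - e * ‖h‖ ^ 2 := by field_simp; ring
    rw [e1, e2] at h3
    exact h3
  · intro h
    rw [hX']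
    have := mul_nonneg h2ε.le (hM1 h)
    linarith
  · intro h
    rw [hY']
    have := mul_nonneg h2ε.le (hM2 h)
    linarith
  · intro h k
    have h1 := hM12 h k
    rw [il_inner_quad] at h1
    rw [hX', hY']
    have h2 := mul_le_mul_of_nonneg_left h1 h2ε.le
    linarith

theorem il_entry {X : Matrix (Fin n) (Fin n) ℝ} (hX : X.IsHermitian) {C : ℝ} (hC : 0 ≤ C)
    (h : ∀ d, |quadForm X d| ≤ C * ‖d‖ ^ 2) (i j : Fin n) : |X i j| ≤ 2 * C := by
  set a : EuclideanSpace ℝ (Fin n) := EuclideanSpace.single i 1 with ha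
  set b : EuclideanSpace ℝ (Fin n) := EuclideanSpace.single j 1 with hb
  have hab : ⟪Matrix.toEuclideanCLM (𝕜 := ℝ) X b, a⟫ = X i j := by
    rw [il_inner_mat]
    simp [ha, hb, Pi.single_apply]
  have hba : ⟪Matrix.toEuclideanCLM (𝕜 := ℝ) X a, b⟫ = X i j := by
    rw [il_mat_symm hX, real_inner_comm, hab]
  have hna : ‖a‖ = 1 := by simp [ha]
  have hnb : ‖b‖ = 1 := by simp [hb]
  have h1 := h (a + b)
  have h2 := h (a - b)
  have n1 : C * ‖a + b‖ ^ 2 ≤ C * 2 ^ 2 := by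
    gcongr; exact (norm_add_le _ _).trans (by rw [hna, hnb]; norm_num)
  have n2 : C * ‖a - b‖ ^ 2 ≤ C * 2 ^ 2 := by
    gcongr; exact (norm_sub_le _ _).trans (by rw [hna, hnb]; norm_num)
  rw [← il_inner_quad, abs_le] at h1 h2
  simp only [map_add, map_sub, inner_add_left, inner_add_right, inner_sub_left,
    inner_sub_right, hab, hba] at h1 h2
  rw [abs_le]
  constructor <;> linarith

theorem il_quad_cont (h : EuclideanSpace ℝ (Fin n)) :
    Continuous (fun X : Matrix (Fin n) (Fin n) ℝ => quadForm X h) := by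
  unfold quadForm
  exact continuous_finset_sum _ fun i _ => continuous_finset_sum _ fun j _ =>
    ((continuous_id.matrix_elem i j).mul continuous_const).mul continuous_const

theorem il_mat_compact (C : ℝ) :
    IsCompact {X : Matrix (Fin n) (Fin n) ℝ | ∀ i j, X i j ∈ Icc (-C) C} := by
  have : IsCompact (Set.pi univ fun _ : Fin n => Set.pi univ fun _ : Fin n => Icc (-C) C) :=
    isCompact_univ_pi fun _ => isCompact_univ_pi fun _ => isCompact_Icc
  change @IsCompact (Fin n → Fin n → ℝ) _ {X : Fin n → Fin n → ℝ | ∀ i j, X i j ∈ Icc (-C) C}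
  have e : {X : Fin n → Fin n → ℝ | ∀ i j, X i j ∈ Icc (-C) C} =
      Set.pi univ fun _ : Fin n => Set.pi univ fun _ : Fin n => Icc (-C) C := by
    ext X
    simp only [mem_setOf_eq, Set.mem_pi, mem_univ, forall_const]
  rw [e]
  exact this

theorem il_mat_subseq {C : ℝ} {X : ℕ → Matrix (Fin n) (Fin n) ℝ}
    (hX : ∀ k i j, |X k i j| ≤ C) :
    ∃ (A : Matrix (Fin n) (Fin n) ℝ) (s : ℕ → ℕ), StrictMono s ∧
      Tendsto (X ∘ s) atTop (𝓝 A) := by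
  have : FirstCountableTopology (Matrix (Fin n) (Fin n) ℝ) :=
    inferInstanceAs (FirstCountableTopology (Fin n → Fin n → ℝ))
  obtain ⟨A, -, s, hs, h⟩ := (il_mat_compact C).tendsto_subseq
    (x := X) fun k i j => ⟨(abs_le.1 (hX k i j)).1, (abs_le.1 (hX k i j)).2⟩
  exact ⟨A, s, hs, h⟩

theorem il_herm_lim {X : ℕ → Matrix (Fin n) (Fin n) ℝ} {A : Matrix (Fin n) (Fin n) ℝ}
    (hX : ∀ k, (X k).IsHermitian) (h : Tendsto X atTop (𝓝 A)) : A.IsHermitian := by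
  have e : ∀ i j, Tendsto (fun k => X k i j) atTop (𝓝 (A i j)) := fun i j =>
    ((continuous_id.matrix_elem i j).tendsto A).comp h
  ext i j
  rw [Matrix.conjTranspose_apply, star_trivial]
  refine tendsto_nhds_unique (e j i) ?_
  refine (e i j).congr fun k => ?_
  have := (hX k).apply i j
  simpa using this.symm

theorem il_split_dot (x : Fin n ⊕ Fin n → ℝ) (a b : Fin n → ℝ) :
    x ⬝ᵥ Sum.elim a b = (x ∘ Sum.inl) ⬝ᵥ a + (x ∘ Sum.inr) ⬝ᵥ b := by
  simp [dotProduct, Fintype.sum_sum_type]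

end Concrete

theorem ishii_lions
    (n : ℕ) (hn : 1 ≤ n) (Ω : Set (EuclideanSpace ℝ (Fin n))) (hΩ : IsOpen Ω)
    (u v : EuclideanSpace ℝ (Fin n) → ℝ) (hu : ContinuousOn u Ω) (hv : ContinuousOn v Ω)
    (φ : EuclideanSpace ℝ (Fin n) → ℝ) (hφ : ContDiff ℝ 2 φ)
    (xb yb : EuclideanSpace ℝ (Fin n)) (hxb : xb ∈ Ω) (hyb : yb ∈ Ω)
    (hmax : IsLocalMaxOn
      (fun t : EuclideanSpace ℝ (Fin n) × EuclideanSpace ℝ (Fin n) =>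
        u t.1 - v t.2 - φ (t.1 - t.2)) (Ω ×ˢ Ω) (xb, yb))
    (ε : ℝ) (hε : 0 < ε)
    (hεZ : ((1 : Matrix (Fin n) (Fin n) ℝ) - ε • hessianMatrix φ (xb - yb)).PosDef) :
    ∃ X Y : Matrix (Fin n) (Fin n) ℝ, X.IsHermitian ∧ Y.IsHermitian ∧
      InClosedSuperJet Ω u xb (gradient φ (xb - yb)) X ∧
      InClosedSubJet Ω v yb (gradient φ (xb - yb)) Y ∧
      (Matrix.fromBlocks X 0 0 (-Y) +
        (2 / ε) • (1 : Matrix (Fin n ⊕ Fin n) (Fin n ⊕ Fin n) ℝ)).PosSemidef ∧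
      (Matrix.fromBlocks
          (((1 : Matrix (Fin n) (Fin n) ℝ) - ε • hessianMatrix φ (xb - yb))⁻¹ *
            hessianMatrix φ (xb - yb))
          (-(((1 : Matrix (Fin n) (Fin n) ℝ) - ε • hessianMatrix φ (xb - yb))⁻¹ *
            hessianMatrix φ (xb - yb)))
          (-(((1 : Matrix (Fin n) (Fin n) ℝ) - ε • hessianMatrix φ (xb - yb))⁻¹ *
            hessianMatrix φ (xb - yb)))
          (((1 : Matrix (Fin n) (Fin n) ℝ) - ε • hessianMatrix φ (xb - yb))⁻¹ *
            hessianMatrix φ (xb - yb)) -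
        Matrix.fromBlocks X 0 0 (-Y)).PosSemidef := by
  set z := gradient φ (xb - yb) with hz
  set Z := hessianMatrix φ (xb - yb) with hZ
  have hstep := fun k : ℕ => il_step Ω hΩ u v hu hv φ hφ xb yb hxb hyb hmax ε hε hεZ
    (θ := (1 + 1 / ((k : ℝ) + 1))⁻¹) (by positivity)
    (inv_lt_one_of_one_lt₀ (by
      have : (0 : ℝ) < 1 / ((k : ℝ) + 1) := by positivity
      linarith))
    (δ := 1 / ((k : ℝ) + 1)) (by positivity)
  choose xs ys ps qs Xs Ys hXs hYs hxΩ hyΩ hx hy hp hq hjX hjY hXl hYl hXY using hstep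
  simp only [inv_inv] at hXY
  rw [← hz] at *
  rw [← hZ] at *
  set Wm : Matrix (Fin n) (Fin n) ℝ := 1 - ε • Z with hWm
  have hTW : Wm⁻¹ * Wm = 1 :=
    Matrix.nonsing_inv_mul _ ((Matrix.isUnit_iff_isUnit_det _).1 hεZ.isUnit)
  have hTZ : Wm⁻¹ * Z = (1 / ε) • (Wm⁻¹ - 1) := by
    have h1 : Wm⁻¹ - ε • (Wm⁻¹ * Z) = 1 := by
      conv_rhs => rw [← hTW]
      conv_rhs => rw [hWm]
      rw [mul_sub, mul_one, mul_smul_comm]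
    have h2 : Wm⁻¹ - 1 = ε • (Wm⁻¹ * Z) := by
      rw [sub_eq_iff_eq_add, ← sub_eq_iff_eq_add']; exact h1
    rw [h2, smul_smul, one_div, inv_mul_cancel₀ hε.ne', one_smul]
  have hTZh : (Wm⁻¹ * Z).IsHermitian := by
    rw [hTZ]
    have := hεZ.inv.isHermitian.sub Matrix.isHermitian_one
    ext i j
    have h2 := this.apply i j
    simp only [star_trivial] at h2
    simp only [Matrix.conjTranspose_apply, Matrix.smul_apply, star_trivial, h2]
  have hTZq : ∀ d, quadForm (Wm⁻¹ * Z) d = 1 / ε * (quadForm Wm⁻¹ d - ‖d‖ ^ 2) := by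
    intro d
    rw [hTZ, ← il_inner_quad, ← il_inner_quad, map_smul, map_sub, map_one, smul_apply,
      real_inner_smul_left, sub_apply, inner_sub_left, one_apply_eq_self,
      real_inner_self_eq_norm_sq]
  obtain ⟨τ, hτ0, -, hτ⟩ := il_posDef_lower hεZ.inv
  set N := ‖Matrix.toEuclideanCLM (𝕜 := ℝ) Wm⁻¹‖ with hN
  have hN0 : 0 ≤ N := norm_nonneg _
  have hTup : ∀ d, quadForm Wm⁻¹ d ≤ N * ‖d‖ ^ 2 := by
    intro d
    rw [← il_inner_quad]
    refine (real_inner_le_norm _ _).trans ?_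
    rw [pow_two, ← mul_assoc]
    gcongr
    exact ContinuousLinearMap.le_opNorm _ _
  have hTpos : ∀ d, 0 ≤ quadForm Wm⁻¹ d := fun d =>
    (by positivity : 0 ≤ τ * ‖d‖ ^ 2).trans (hτ d)
  have h2ε : 0 < 2 / ε := by positivity
  set C := 2 / ε * (2 * (1 + N)) with hC
  have hC0 : 0 ≤ C := by positivity
  have hCl : 2 / ε ≤ C := by
    rw [hC]; exact le_mul_of_one_le_right h2ε.le (by linarith)
  have hq0 : ∀ A : Matrix (Fin n) (Fin n) ℝ, quadForm A 0 = 0 := by intro A; simp [quadForm]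
  have hneg : ∀ (A : Matrix (Fin n) (Fin n) ℝ) d, quadForm A (-d) = quadForm A d := by
    intro A d; simp [quadForm]
  have hsq : ∀ k : ℕ, (1 + 1 / ((k : ℝ) + 1)) ^ 2 ≤ 4 := by
    intro k
    have h1 : 1 / ((k : ℝ) + 1) ≤ 1 := by
      rw [div_le_one (by positivity)]; linarith [(Nat.cast_nonneg k : (0 : ℝ) ≤ k)]
    have h2 : (0 : ℝ) < 1 / ((k : ℝ) + 1) := by positivity
    nlinarith
  have hbd : ∀ (k : ℕ) d, 2 / ε * ((1 + 1 / ((k : ℝ) + 1)) ^ 2 * ((1 / 2) * ‖d‖ ^ 2 +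
      (1 / 2) * quadForm Wm⁻¹ d) - ‖d‖ ^ 2) ≤ C * ‖d‖ ^ 2 := by
    intro k d
    rw [hC, mul_assoc (2 / ε)]
    refine mul_le_mul_of_nonneg_left ?_ h2ε.le
    have h1 := hTpos d
    have h2 : (1 + 1 / ((k : ℝ) + 1)) ^ 2 * ((1 / 2) * ‖d‖ ^ 2 + (1 / 2) * quadForm Wm⁻¹ d) ≤
      4 * ((1 / 2) * ‖d‖ ^ 2 + (1 / 2) * (N * ‖d‖ ^ 2)) := by
      gcongr
      · exact hsq k
      · exact hTup d
    linarith [sq_nonneg ‖d‖]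
  have hXb : ∀ k d, |quadForm (Xs k) d| ≤ C * ‖d‖ ^ 2 := by
    intro k d
    have h1 := hXl k d
    have h2 := hXY k d 0
    rw [hq0, add_zero, sub_zero, sub_zero, norm_zero] at h2
    have h3 := hbd k d
    have h4 : 2 / ε * ‖d‖ ^ 2 ≤ C * ‖d‖ ^ 2 := by gcongr
    rw [abs_le]
    constructor
    · linarith
    · refine h2.trans (le_trans (le_of_eq ?_) h3)
      ring
  have hYb : ∀ k d, |quadForm (Ys k) d| ≤ C * ‖d‖ ^ 2 := by
    intro k d
    have h1 := hYl k d
    have h2 := hXY k 0 d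
    rw [hq0, zero_add, zero_sub, zero_sub, norm_zero, hneg] at h2
    have h3 := hbd k d
    have h4 : 2 / ε * ‖d‖ ^ 2 ≤ C * ‖d‖ ^ 2 := by gcongr
    rw [abs_le]
    constructor
    · have h5 : -quadForm (Ys k) d ≤ C * ‖d‖ ^ 2 := by
        refine h2.trans (le_trans (le_of_eq ?_) h3)
        ring
      linarith
    · linarith
  obtain ⟨X, s, hs, hXlim0⟩ := il_mat_subseq (fun k => il_entry (hXs k) hC0 (hXb k))
  obtain ⟨Y, s', hs', hYlim⟩ := il_mat_subseq (X := Ys ∘ s)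
    (fun k => il_entry (hYs (s k)) hC0 (hYb (s k)))
  set σ := s ∘ s' with hσ
  have hσt : Tendsto σ atTop atTop := (hs.comp hs').tendsto_atTop
  have hXlim : Tendsto (fun k => Xs (σ k)) atTop (𝓝 X) := hXlim0.comp hs'.tendsto_atTop
  have hYlim : Tendsto (fun k => Ys (σ k)) atTop (𝓝 Y) := hYlim
  have hone : Tendsto (fun k : ℕ => 1 / ((k : ℝ) + 1)) atTop (𝓝 0) :=
    tendsto_one_div_add_atTop_nhds_zero_nat
  have hconv : ∀ (a : ℕ → EuclideanSpace ℝ (Fin n)) (b : EuclideanSpace ℝ (Fin n)),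
      (∀ k : ℕ, ‖a k - b‖ < 1 / ((k : ℝ) + 1)) → Tendsto (fun k => a (σ k)) atTop (𝓝 b) := by
    intro a b hab
    have : Tendsto a atTop (𝓝 b) := by
      rw [tendsto_iff_norm_sub_tendsto_zero]
      exact squeeze_zero (fun _ => norm_nonneg _) (fun k => (hab k).le) hone
    exact this.comp hσt
  have hθlim : Tendsto (fun k => 1 + 1 / ((σ k : ℝ) + 1)) atTop (𝓝 1) := by
    have := (hone.comp hσt).const_add 1
    simpa using this
  have hqX : ∀ h, Tendsto (fun k => quadForm (Xs (σ k)) h) atTop (𝓝 (quadForm X h)) := fun h =>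
    ((il_quad_cont h).tendsto X).comp hXlim
  have hqY : ∀ h, Tendsto (fun k => quadForm (Ys (σ k)) h) atTop (𝓝 (quadForm Y h)) := fun h =>
    ((il_quad_cont h).tendsto Y).comp hYlim
  have hXh : X.IsHermitian := il_herm_lim (fun k => hXs (σ k)) hXlim
  have hYh : Y.IsHermitian := il_herm_lim (fun k => hYs (σ k)) hYlim
  have fX : ∀ h, -(2 / ε) * ‖h‖ ^ 2 ≤ quadForm X h := fun h =>
    ge_of_tendsto' (hqX h) fun k => hXl (σ k) h
  have fY : ∀ h, quadForm Y h ≤ 2 / ε * ‖h‖ ^ 2 := fun h =>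
    le_of_tendsto' (hqY h) fun k => hYl (σ k) h
  have fXY : ∀ h k, quadForm X h - quadForm Y k ≤ quadForm (Wm⁻¹ * Z) (h - k) := by
    intro h k
    have h1 := (hqX h).sub (hqY k)
    have h2 : Tendsto (fun j => 2 / ε * ((1 + 1 / ((σ j : ℝ) + 1)) ^ 2 * ((1 / 2) * ‖h + k‖ ^ 2 +
        (1 / 2) * quadForm Wm⁻¹ (h - k)) - ‖h‖ ^ 2 - ‖k‖ ^ 2)) atTop
        (𝓝 (2 / ε * (1 ^ 2 * ((1 / 2) * ‖h + k‖ ^ 2 +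
        (1 / 2) * quadForm Wm⁻¹ (h - k)) - ‖h‖ ^ 2 - ‖k‖ ^ 2))) :=
      (((((hθlim.pow 2).mul_const _).sub_const _).sub_const _).const_mul _)
    have h3 := le_of_tendsto_of_tendsto' h1 h2 fun j => hXY (σ j) h k
    refine h3.trans (le_of_eq ?_)
    rw [hTZq, norm_add_sq_real, norm_sub_sq_real]
    field_simp
    ring
  refine ⟨X, Y, hXh, hYh, ?_, ?_, ?_, ?_⟩
  · refine ⟨fun k => xs (σ k), fun k => ps (σ k), fun k => Xs (σ k),
      fun k => ⟨hxΩ _, hjX _⟩, hconv _ _ hx, ?_, hconv _ _ hp, hXlim⟩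
    exact (hu.continuousAt (hΩ.mem_nhds hxb)).tendsto.comp (hconv _ _ hx)
  · refine ⟨fun k => ys (σ k), fun k => qs (σ k), fun k => Ys (σ k),
      fun k => ⟨hyΩ _, hjY _⟩, hconv _ _ hy, ?_, hconv _ _ hq, hYlim⟩
    exact (hv.continuousAt (hΩ.mem_nhds hyb)).tendsto.comp (hconv _ _ hy)
  · refine Matrix.PosSemidef.of_dotProduct_mulVec_nonneg ?_ ?_
    · refine Matrix.IsHermitian.add ?_ ?_
      · refine Matrix.IsHermitian.fromBlocks hXh (by simp) hYh.neg
      · ext i j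
        simp [Matrix.one_apply, eq_comm]
    · intro x
      have h1 := fX (WithLp.toLp 2 (x ∘ Sum.inl))
      have h2 := fY (WithLp.toLp 2 (x ∘ Sum.inr))
      rw [il_quad_dot, EuclideanSpace.real_norm_sq_eq] at h1 h2
      rw [star_trivial, Matrix.add_mulVec, dotProduct_add, Matrix.fromBlocks_mulVec,
        il_split_dot, Matrix.smul_mulVec, Matrix.one_mulVec, dotProduct_smul, smul_eq_mul]
      have h3 : x ⬝ᵥ x = ∑ i, (x ∘ Sum.inl) i ^ 2 + ∑ i, (x ∘ Sum.inr) i ^ 2 := by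
        simp [dotProduct, Fintype.sum_sum_type, pow_two]
      rw [h3, Matrix.zero_mulVec, Matrix.zero_mulVec, add_zero, zero_add, Matrix.neg_mulVec,
        dotProduct_neg]
      simp only at h1 h2
      linarith
  · refine Matrix.PosSemidef.of_dotProduct_mulVec_nonneg ?_ ?_
    · refine Matrix.IsHermitian.sub ?_ ?_
      · refine Matrix.IsHermitian.fromBlocks hTZh ?_ hTZh
        exact hTZh.neg
      · refine Matrix.IsHermitian.fromBlocks hXh (by simp) hYh.neg
    · intro x
      have h1 := fXY (WithLp.toLp 2 (x ∘ Sum.inl)) (WithLp.toLp 2 (x ∘ Sum.inr))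
      rw [← WithLp.toLp_sub, il_quad_dot, il_quad_dot, il_quad_dot, Matrix.mulVec_sub,
        dotProduct_sub, sub_dotProduct, sub_dotProduct] at h1
      rw [star_trivial, Matrix.sub_mulVec, dotProduct_sub, Matrix.fromBlocks_mulVec,
        Matrix.fromBlocks_mulVec, il_split_dot, il_split_dot]
      simp only [Matrix.zero_mulVec, Matrix.neg_mulVec, add_zero, zero_add, dotProduct_neg,
        dotProduct_add]
      linarith
end

section
/- Let n ≥ 1, −1 < p ≤ q, γ = q − p, 0 < λ < Λ, C₀ > 0, Ω ⊂ ℝⁿ, and let F : S(n)×ℝⁿ×Ω → ℝ satisfy, for all x ∈ Ω, M, N ∈ S(n), and z, w ∈ ℝⁿ with |z| ≥ C₀, |w| ≥ C₀: F(0,z,x) = 0; (A1) M⁻_{λ|z|^p,Λ(|z|^p+|z|^q)}(N) ≤ F(M+N,z,x) − F(M,z,x) ≤ M⁺_{λ|z|^p,Λ(|z|^p+|z|^q)}(N); and (A2) |F(M,z,x) − F(M,w,x)| ≤ Λ|z−w|(|z|^{q−1}+|w|^{q−1})(‖M‖+1) whenever |w|/2 ≤ |z| ≤ 2|w|. Then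 there exists C = C(n,p,q,C₀) > 0 such that for all M ∈ S(n), x ∈ Ω, and all z, w ∈ ℝⁿ with |z| ≥ C₀, |w| ≥ C₀, and |w|/2 ≤ |z| ≤ 2|w|, the rescaled operator F̃(M,z,x) := |z|^{−p}F(M,z,x) satisfies |F̃(M,z,x) − F̃(M,w,x)| ≤ C·Λ·|z−w|(|z|^{γ−1}+|w|^{γ−1})(1+‖M‖). -/
open Metric Set
noncomputable def pucciPlus {n : ℕ} (lam Lam : ℝ) (N : Matrix (Fin n) (Fin n) ℝ) : ℝ :=
  if h : N.IsHermitian then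
    ∑ i, if 0 < h.eigenvalues i then Lam * h.eigenvalues i else lam * h.eigenvalues i
  else 0

noncomputable def pucciMinus {n : ℕ} (lam Lam : ℝ) (N : Matrix (Fin n) (Fin n) ℝ) : ℝ :=
  if h : N.IsHermitian then
    ∑ i, if 0 < h.eigenvalues i then lam * h.eigenvalues i else Lam * h.eigenvalues i
  else 0

noncomputable def opNorm {n : ℕ} (M : Matrix (Fin n) (Fin n) ℝ) : ℝ :=
  ‖Matrix.toEuclideanCLM (𝕜 := ℝ) M‖

/-- Condition (A1): `(p,q)`-growth of `F`. -/
def CondA1 {n : ℕ} (Ω : Set (EuclideanSpace ℝ (Fin n)))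
    (F : Matrix (Fin n) (Fin n) ℝ → EuclideanSpace ℝ (Fin n) → EuclideanSpace ℝ (Fin n) → ℝ)
    (lam Lam p q C₀ : ℝ) : Prop :=
  ∀ x ∈ Ω, ∀ z : EuclideanSpace ℝ (Fin n), C₀ ≤ ‖z‖ →
    ∀ M N : Matrix (Fin n) (Fin n) ℝ, M.IsHermitian → N.IsHermitian →
      pucciMinus (lam * ‖z‖ ^ p) (Lam * (‖z‖ ^ p + ‖z‖ ^ q)) N ≤ F (M + N) z x - F M z x ∧
      F (M + N) z x - F M z x ≤ pucciPlus (lam * ‖z‖ ^ p) (Lam * (‖z‖ ^ p + ‖z‖ ^ q)) N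

/-- Condition (A2): Lipschitz continuity of `F` in the gradient variable. -/
def CondA2 {n : ℕ} (Ω : Set (EuclideanSpace ℝ (Fin n)))
    (F : Matrix (Fin n) (Fin n) ℝ → EuclideanSpace ℝ (Fin n) → EuclideanSpace ℝ (Fin n) → ℝ)
    (Lam q C₀ : ℝ) : Prop :=
  ∀ x ∈ Ω, ∀ z w : EuclideanSpace ℝ (Fin n), C₀ ≤ ‖z‖ → C₀ ≤ ‖w‖ →
    ‖w‖ / 2 ≤ ‖z‖ → ‖z‖ ≤ 2 * ‖w‖ →
    ∀ M : Matrix (Fin n) (Fin n) ℝ, M.IsHermitian →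
      |F M z x - F M w x| ≤ Lam * ‖z - w‖ * (‖z‖ ^ (q - 1) + ‖w‖ ^ (q - 1)) * (opNorm M + 1)

/-- Condition (A3): Hölder continuity of `F` in the space variable. -/
def CondA3 {n : ℕ} (Ω : Set (EuclideanSpace ℝ (Fin n)))
    (F : Matrix (Fin n) (Fin n) ℝ → EuclideanSpace ℝ (Fin n) → EuclideanSpace ℝ (Fin n) → ℝ)
    (Lam q α C₀ : ℝ) : Prop :=
  ∀ x ∈ Ω, ∀ y ∈ Ω, ∀ z : EuclideanSpace ℝ (Fin n), C₀ ≤ ‖z‖ →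
    ∀ M : Matrix (Fin n) (Fin n) ℝ, M.IsHermitian →
      |F M z x - F M z y| ≤ Lam * ‖x - y‖ ^ α * ‖z‖ ^ q * (opNorm M + 1)

/-- Condition (A4): normalization of `F` and growth of `f`. -/
def CondA4 {n : ℕ} (Ω : Set (EuclideanSpace ℝ (Fin n)))
    (F : Matrix (Fin n) (Fin n) ℝ → EuclideanSpace ℝ (Fin n) → EuclideanSpace ℝ (Fin n) → ℝ)
    (f : EuclideanSpace ℝ (Fin n) → EuclideanSpace ℝ (Fin n) → ℝ)
    (q C₀ Cf : ℝ) : Prop :=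
  (∀ x ∈ Ω, ∀ z : EuclideanSpace ℝ (Fin n), C₀ ≤ ‖z‖ → F 0 z x = 0) ∧
  (∀ x ∈ Ω, ∀ z : EuclideanSpace ℝ (Fin n), |f x z| ≤ Cf * (1 + ‖z‖ ^ (q + 1)))

theorem aux_rpow (t b r : ℝ) (hb : 0 < b) (h1 : b / 2 ≤ t) (h2 : t ≤ 2 * b) :
    t ^ r ≤ 2 ^ |r| * b ^ r := by
  have ht : 0 < t := by linarith
  rcases le_total 0 r with hr | hr
  · rw [abs_of_nonneg hr, ← Real.mul_rpow (by norm_num) hb.le]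
    exact Real.rpow_le_rpow ht.le h2 hr
  · have h3 : (2:ℝ) ^ |r| * b ^ r = (b / 2) ^ r := by
      rw [abs_of_nonpos hr, Real.div_rpow hb.le (by norm_num), Real.rpow_neg (by norm_num)]
      field_simp
    rw [h3]
    exact Real.rpow_le_rpow_of_nonpos (by linarith) h1 hr

theorem aux_mvt (a b p : ℝ) (hb : 0 < b) (h1 : b / 2 ≤ a) (h2 : a ≤ 2 * b) :
    |a ^ (-p) - b ^ (-p)| ≤ |p| * (2 ^ |(-p - 1)| * b ^ (-p - 1)) * |a - b| := by
  have h := (convex_Icc (b / 2) (2 * b)).norm_image_sub_le_of_norm_hasDerivWithin_le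
    (f := fun t : ℝ => t ^ (-p)) (f' := fun t : ℝ => (-p) * t ^ (-p - 1))
    (C := |p| * (2 ^ |(-p - 1)| * b ^ (-p - 1))) (x := b) (y := a)
    (fun t ht => (Real.hasDerivAt_rpow_const
      (Or.inl (by have := ht.1; intro h0; linarith))).hasDerivWithinAt)
    (fun t ht => by
      have ht0 : 0 < t := by have := ht.1; linarith
      rw [norm_mul, Real.norm_eq_abs, Real.norm_eq_abs, abs_neg,
        abs_of_pos (Real.rpow_pos_of_pos ht0 _)]
      exact mul_le_mul_of_nonneg_left (aux_rpow t b _ hb ht.1 ht.2) (abs_nonneg p))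
    ⟨by linarith, by linarith⟩ ⟨h1, h2⟩
  simpa only [Real.norm_eq_abs] using h

theorem opNorm_nonneg' {n : ℕ} (M : Matrix (Fin n) (Fin n) ℝ) : 0 ≤ opNorm M := norm_nonneg _

theorem aux_eig {n : ℕ} (M : Matrix (Fin n) (Fin n) ℝ) (h : M.IsHermitian) (i : Fin n) :
    |h.eigenvalues i| ≤ opNorm M := by
  have h1 : Matrix.toEuclideanCLM (𝕜 := ℝ) M (h.eigenvectorBasis i)
      = h.eigenvalues i • h.eigenvectorBasis i := by
    have := h.mulVec_eigenvectorBasis i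
    ext j
    have := congrFun this j
    simpa using this
  have h2 := (Matrix.toEuclideanCLM (𝕜 := ℝ) M).le_opNorm (h.eigenvectorBasis i)
  rw [h1, norm_smul, h.eigenvectorBasis.orthonormal.1 i] at h2
  simpa [opNorm] using h2

theorem aux_term (l L e K : ℝ) (hl : 0 ≤ l) (hlL : l ≤ L) (he : |e| ≤ K) :
    |l * e| ≤ L * K ∧ |L * e| ≤ L * K := by
  rw [abs_mul, abs_mul, abs_of_nonneg hl, abs_of_nonneg (hl.trans hlL)]
  exact ⟨mul_le_mul hlL he (abs_nonneg _) (hl.trans hlL),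
    mul_le_mul_of_nonneg_left he (hl.trans hlL)⟩

theorem aux_plus {n : ℕ} (M : Matrix (Fin n) (Fin n) ℝ) (h : M.IsHermitian) (l L : ℝ)
    (hl : 0 ≤ l) (hlL : l ≤ L) : pucciPlus l L M ≤ n * (L * opNorm M) := by
  rw [pucciPlus, dif_pos h]
  calc _ ≤ ∑ _i : Fin n, L * opNorm M := by
        refine Finset.sum_le_sum fun i _ => ?_
        have := aux_term l L _ _ hl hlL (aux_eig M h i)
        split_ifs
        · exact (le_abs_self _).trans this.2
        · exact (le_abs_self _).trans this.1
    _ = _ := by simp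

theorem aux_minus {n : ℕ} (M : Matrix (Fin n) (Fin n) ℝ) (h : M.IsHermitian) (l L : ℝ)
    (hl : 0 ≤ l) (hlL : l ≤ L) : -(n * (L * opNorm M)) ≤ pucciMinus l L M := by
  rw [pucciMinus, dif_pos h]
  calc _ = ∑ _i : Fin n, -(L * opNorm M) := by simp
    _ ≤ _ := by
        refine Finset.sum_le_sum fun i _ => ?_
        have := aux_term l L _ _ hl hlL (aux_eig M h i)
        split_ifs
        · exact (abs_le.1 this.1).1
        · exact (abs_le.1 this.2).1

theorem rescaled_operator_gradient_lipschitz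
    (n : ℕ) (hn : 1 ≤ n) (p q C₀ : ℝ) (hp : -1 < p) (hpq : p ≤ q) (hC₀ : 0 < C₀) :
    ∃ C : ℝ, 0 < C ∧
      ∀ (lam Lam : ℝ) (Ω : Set (EuclideanSpace ℝ (Fin n)))
        (F : Matrix (Fin n) (Fin n) ℝ → EuclideanSpace ℝ (Fin n) →
          EuclideanSpace ℝ (Fin n) → ℝ),
        0 < lam → lam < Lam →
        (∀ x ∈ Ω, ∀ z : EuclideanSpace ℝ (Fin n), C₀ ≤ ‖z‖ → F 0 z x = 0) →
        CondA1 Ω F lam Lam p q C₀ →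
        CondA2 Ω F Lam q C₀ →
        ∀ M : Matrix (Fin n) (Fin n) ℝ, M.IsHermitian → ∀ x ∈ Ω,
          ∀ z w : EuclideanSpace ℝ (Fin n), C₀ ≤ ‖z‖ → C₀ ≤ ‖w‖ →
            ‖w‖ / 2 ≤ ‖z‖ → ‖z‖ ≤ 2 * ‖w‖ →
            |‖z‖ ^ (-p) * F M z x - ‖w‖ ^ (-p) * F M w x| ≤
              C * Lam * ‖z - w‖ * (‖z‖ ^ (q - p - 1) + ‖w‖ ^ (q - p - 1)) * (1 + opNorm M) := by
  refine ⟨1 + 2 ^ |(-p)| + |p| * 2 ^ |(-p - 1)| * n * (1 + C₀ ^ (-(q - p))), by positivity, ?_⟩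
  intro lam Lam Ω F hlam hLam hF0 hA1 hA2 M hM x hx z w hz hw h1 h2
  have ha : 0 < ‖z‖ := hC₀.trans_le hz
  have hb : 0 < ‖w‖ := hC₀.trans_le hw
  have hd : |‖z‖ - ‖w‖| ≤ ‖z - w‖ := abs_norm_sub_norm_le z w
  have hL : 0 < Lam := hlam.trans hLam
  have hK : 0 ≤ opNorm M := opNorm_nonneg' M
  have e2 := hA2 x hx z w hz hw h1 h2 M hM
  have hFw : |F M w x| ≤ n * (Lam * (‖w‖ ^ p + ‖w‖ ^ q) * opNorm M) := by
    have h3 := hA1 x hx w hw 0 M Matrix.isHermitian_zero hM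
    rw [zero_add, hF0 x hx w hw, sub_zero] at h3
    have hbp := Real.rpow_pos_of_pos hb p
    have hbq := Real.rpow_pos_of_pos hb q
    have hl : 0 ≤ lam * ‖w‖ ^ p := by positivity
    have hlL : lam * ‖w‖ ^ p ≤ Lam * (‖w‖ ^ p + ‖w‖ ^ q) :=
      mul_le_mul hLam.le (by linarith) hbp.le hL.le
    exact abs_le.2 ⟨(aux_minus M hM _ _ hl hlL).trans h3.1, h3.2.trans (aux_plus M hM _ _ hl hlL)⟩
  have hm := aux_mvt ‖z‖ ‖w‖ p hb (by linarith) h2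
  have hr := aux_rpow ‖z‖ ‖w‖ (-p) hb (by linarith) h2
  clear hA1 hA2 hF0
  generalize F M z x = f at *
  generalize F M w x = g at *
  generalize ‖z - w‖ = d at *
  generalize opNorm M = K at *
  generalize ‖z‖ = a at *
  generalize ‖w‖ = b at *
  have hd0 : 0 ≤ d := (abs_nonneg _).trans hd
  have hap := Real.rpow_pos_of_pos ha (-p)
  have hA := Real.rpow_pos_of_pos ha (q - p - 1)
  have hB := Real.rpow_pos_of_pos hb (q - p - 1)
  have hb' := Real.rpow_pos_of_pos hb (-p - 1)
  have ea : a ^ (-p) * a ^ (q - 1) = a ^ (q - p - 1) := by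
    rw [← Real.rpow_add ha]; congr 1; ring
  have eb : b ^ (-p) * b ^ (q - 1) = b ^ (q - p - 1) := by
    rw [← Real.rpow_add hb]; congr 1; ring
  have ec : b ^ (-p - 1) * b ^ q = b ^ (q - p - 1) := by
    rw [← Real.rpow_add hb]; congr 1; ring
  have ed : b ^ (-p - 1) * b ^ p ≤ C₀ ^ (-(q - p)) * b ^ (q - p - 1) := by
    have h5 : b ^ (-p - 1) * b ^ p = b ^ (-(q - p)) * b ^ (q - p - 1) := by
      rw [← Real.rpow_add hb, ← Real.rpow_add hb]; congr 1; ring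
    rw [h5]
    exact mul_le_mul_of_nonneg_right
      (Real.rpow_le_rpow_of_nonpos hC₀ hw (by linarith)) hB.le
  have t1 : a ^ (-p) * |f - g| ≤
      (1 + 2 ^ |(-p)|) * Lam * d * (a ^ (q - p - 1) + b ^ (q - p - 1)) * (1 + K) := by
    have hbq := Real.rpow_pos_of_pos hb (q - 1)
    have h6 : a ^ (-p) * (a ^ (q - 1) + b ^ (q - 1)) ≤
        (1 + 2 ^ |(-p)|) * (a ^ (q - p - 1) + b ^ (q - p - 1)) := by
      have h7 := mul_le_mul_of_nonneg_right hr hbq.le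
      rw [mul_assoc, eb] at h7
      have h8 : 0 ≤ (2:ℝ) ^ |(-p)| * a ^ (q - p - 1) := by positivity
      rw [mul_add, ea]
      linarith
    calc _ ≤ a ^ (-p) * (Lam * d * (a ^ (q - 1) + b ^ (q - 1)) * (K + 1)) :=
          mul_le_mul_of_nonneg_left e2 hap.le
      _ = (Lam * d * (1 + K)) * (a ^ (-p) * (a ^ (q - 1) + b ^ (q - 1))) := by ring
      _ ≤ (Lam * d * (1 + K)) * ((1 + 2 ^ |(-p)|) * (a ^ (q - p - 1) + b ^ (q - p - 1))) :=
          mul_le_mul_of_nonneg_left h6 (by positivity)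
      _ = _ := by ring
  have t2 : |a ^ (-p) - b ^ (-p)| * |g| ≤
      (|p| * 2 ^ |(-p - 1)| * n * (1 + C₀ ^ (-(q - p)))) * Lam * d *
        (a ^ (q - p - 1) + b ^ (q - p - 1)) * (1 + K) := by
    have hbp := Real.rpow_pos_of_pos hb p
    have hbq := Real.rpow_pos_of_pos hb q
    have hc := Real.rpow_pos_of_pos hC₀ (-(q - p))
    have h6 : b ^ (-p - 1) * (b ^ p + b ^ q) ≤
        (1 + C₀ ^ (-(q - p))) * (a ^ (q - p - 1) + b ^ (q - p - 1)) := by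
      have h8 : 0 ≤ C₀ ^ (-(q - p)) * a ^ (q - p - 1) := by positivity
      rw [mul_add, ec]
      linarith
    calc _ ≤ (|p| * (2 ^ |(-p - 1)| * b ^ (-p - 1)) * d) *
          (n * (Lam * (b ^ p + b ^ q) * (1 + K))) := by
          refine mul_le_mul (hm.trans (mul_le_mul_of_nonneg_left hd (by positivity)))
            (hFw.trans ?_) (abs_nonneg _) (by positivity)
          gcongr
          linarith
      _ = (|p| * 2 ^ |(-p - 1)| * n * Lam * d * (1 + K)) *
          (b ^ (-p - 1) * (b ^ p + b ^ q)) := by ring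
      _ ≤ (|p| * 2 ^ |(-p - 1)| * n * Lam * d * (1 + K)) *
          ((1 + C₀ ^ (-(q - p))) * (a ^ (q - p - 1) + b ^ (q - p - 1))) :=
          mul_le_mul_of_nonneg_left h6 (by positivity)
      _ = _ := by ring
  calc |a ^ (-p) * f - b ^ (-p) * g|
      = |a ^ (-p) * (f - g) + (a ^ (-p) - b ^ (-p)) * g| := by congr 1; ring
    _ ≤ |a ^ (-p) * (f - g)| + |(a ^ (-p) - b ^ (-p)) * g| := abs_add_le _ _
    _ = a ^ (-p) * |f - g| + |a ^ (-p) - b ^ (-p)| * |g| := by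
        rw [abs_mul, abs_mul, abs_of_pos hap]
    _ ≤ _ := add_le_add t1 t2
    _ = _ := by ring
end

section
/- Let n ≥ 1, let a ∈ ℝⁿ be a unit vector, and let L₁ > 0, δ > 0, κ ∈ (0,1). Define Z = L₁δ^{κ−2}·((κ−1)·a aᵀ + (I − a aᵀ)) and ε = δ^{2−κ}/(2L₁). Then I − εZ is invertible and Z^ε := (I − εZ)^{−1}Z = L₁δ^{κ−2}·( (2(κ−1)/(3−κ))·a aᵀ + 2(I − a aᵀ) ). Moreover, if X, Y ∈ S(n) satisfy, in the Loewner order on 2n×2n symmetric matrices, −(2/ε)·[[I,0],[0,I]] ≤ [[X,0],[0,−Y]] ≤ [[Z^ε,−Z^ε],[−Z^ε,Z^ε]], then ‖X‖ ≤ 4L₁δ^{κ−2} and ‖Y‖ ≤ 4L₁δ^{κ−2}. -/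
open Metric Set
open Matrix in
theorem opNorm_le_aux {n : ℕ} (M : Matrix (Fin n) (Fin n) ℝ) (hM : M.IsHermitian) (C : ℝ)
    (hC : 0 ≤ C) (h1 : ∀ x : Fin n → ℝ, x ⬝ᵥ (M *ᵥ x) ≤ C * (x ⬝ᵥ x))
    (h2 : ∀ x : Fin n → ℝ, -(C * (x ⬝ᵥ x)) ≤ x ⬝ᵥ (M *ᵥ x)) : opNorm M ≤ C := by
  unfold opNorm
  have hs : (Matrix.toEuclideanCLM (𝕜 := ℝ) M).IsSymmetric := by
    rw [Matrix.coe_toEuclideanCLM_eq_toEuclideanLin]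
    exact Matrix.isSymmetric_toEuclideanLin_iff.mpr hM
  rw [ContinuousLinearMap.norm_eq_iSup_rayleighQuotient _ hs]
  refine ciSup_le fun x => ?_
  have hx : ‖x‖ ^ 2 = x.ofLp ⬝ᵥ x.ofLp := by
    rw [EuclideanSpace.real_norm_sq_eq]
    simp [dotProduct, sq]
  have hr : (Matrix.toEuclideanCLM (𝕜 := ℝ) M).reApplyInnerSelf x
      = x.ofLp ⬝ᵥ (M *ᵥ x.ofLp) := by
    rw [ContinuousLinearMap.reApplyInnerSelf_apply, real_inner_comm]
    simp [Matrix.inner_toEuclideanCLM]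
  rw [ContinuousLinearMap.rayleighQuotient, hr, hx, abs_div]
  have h0 : 0 ≤ x.ofLp ⬝ᵥ x.ofLp := by rw [← hx]; positivity
  rw [abs_of_nonneg h0]
  exact div_le_of_le_mul₀ h0 hC (abs_le.mpr ⟨h2 _, h1 _⟩)

open scoped Matrix in
theorem matrix_estimate_holder_step
    (n : ℕ) (hn : 1 ≤ n) (a : EuclideanSpace ℝ (Fin n)) (ha : ‖a‖ = 1)
    (L₁ δ κ : ℝ) (hL₁ : 0 < L₁) (hδ : 0 < δ) (hκ : κ ∈ Set.Ioo (0 : ℝ) 1)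
    (Z : Matrix (Fin n) (Fin n) ℝ)
    (hZ : Z = (L₁ * δ ^ (κ - 2)) •
      ((κ - 1) • Matrix.vecMulVec (fun i => a i) (fun i => a i) +
        (1 - Matrix.vecMulVec (fun i => a i) (fun i => a i))))
    (ε : ℝ) (hε : ε = δ ^ (2 - κ) / (2 * L₁)) :
    IsUnit ((1 : Matrix (Fin n) (Fin n) ℝ) - ε • Z) ∧
    ((1 : Matrix (Fin n) (Fin n) ℝ) - ε • Z)⁻¹ * Z =
      (L₁ * δ ^ (κ - 2)) •
        ((2 * (κ - 1) / (3 - κ)) • Matrix.vecMulVec (fun i => a i) (fun i => a i) +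
          (2 : ℝ) • ((1 : Matrix (Fin n) (Fin n) ℝ) -
            Matrix.vecMulVec (fun i => a i) (fun i => a i))) ∧
    ∀ X Y : Matrix (Fin n) (Fin n) ℝ, X.IsHermitian → Y.IsHermitian →
      (Matrix.fromBlocks X 0 0 (-Y) +
        (2 / ε) • (1 : Matrix (Fin n ⊕ Fin n) (Fin n ⊕ Fin n) ℝ)).PosSemidef →
      (Matrix.fromBlocks
          (((1 : Matrix (Fin n) (Fin n) ℝ) - ε • Z)⁻¹ * Z)
          (-(((1 : Matrix (Fin n) (Fin n) ℝ) - ε • Z)⁻¹ * Z))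
          (-(((1 : Matrix (Fin n) (Fin n) ℝ) - ε • Z)⁻¹ * Z))
          (((1 : Matrix (Fin n) (Fin n) ℝ) - ε • Z)⁻¹ * Z) -
        Matrix.fromBlocks X 0 0 (-Y)).PosSemidef →
      opNorm X ≤ 4 * L₁ * δ ^ (κ - 2) ∧ opNorm Y ≤ 4 * L₁ * δ ^ (κ - 2) := by
  obtain ⟨hκ0, hκ1⟩ := hκ
  set c := L₁ * δ ^ (κ - 2) with hc
  have hd : 0 < δ ^ (κ - 2) := Real.rpow_pos_of_pos hδ _
  have hcpos : 0 < c := by positivity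
  have hεc : ε = 1 / (2 * c) := by
    rw [hε, hc, show (2 - κ) = -(κ - 2) by ring, Real.rpow_neg hδ.le]
    field_simp
  have h4 : 4 * L₁ * δ ^ (κ - 2) = 4 * c := by rw [hc]; ring
  rw [h4]
  have haa : (fun i => a i) ⬝ᵥ (fun i => a i) = (1 : ℝ) := by
    have := EuclideanSpace.real_norm_sq_eq a
    rw [ha] at this
    simp only [dotProduct, ← sq]
    linarith
  clear_value c
  generalize hv : (fun i => a i) = v at *
  set P := Matrix.vecMulVec v v with hP
  have hPP : P * P = P := by
    rw [hP, Matrix.vecMulVec_mul_vecMulVec, haa]; simp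
  have hPx : ∀ x : Fin n → ℝ, x ⬝ᵥ (P *ᵥ x) = (v ⬝ᵥ x) ^ 2 := by
    intro x
    rw [hP, Matrix.vecMulVec_mulVec]
    simp [dotProduct_comm x v, sq]
  have hA : (1 : Matrix (Fin n) (Fin n) ℝ) - ε • Z = ((3 - κ) / 2) • P + (1 / 2 : ℝ) • (1 - P) := by
    rw [hZ, hεc, smul_smul, show 1 / (2 * c) * c = 1 / 2 by field_simp]
    module
  have h3 : 3 - κ ≠ 0 := by linarith
  clear_value P
  set B : Matrix (Fin n) (Fin n) ℝ := (2 / (3 - κ)) • P + (2 : ℝ) • (1 - P) with hB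
  have hAB : ((1 : Matrix (Fin n) (Fin n) ℝ) - ε • Z) * B = 1 := by
    rw [hA, hB]
    simp only [add_mul, mul_add, sub_mul, mul_sub, smul_mul_assoc, mul_smul_comm, hPP, one_mul,
      mul_one, smul_smul, sub_self, smul_zero, add_zero, zero_add]
    rw [show 2 / (3 - κ) * ((3 - κ) / 2) = 1 by field_simp]
    module
  have hinv : ((1 : Matrix (Fin n) (Fin n) ℝ) - ε • Z)⁻¹ = B := Matrix.inv_eq_right_inv hAB
  have hW : ((1 : Matrix (Fin n) (Fin n) ℝ) - ε • Z)⁻¹ * Z =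
      c • ((2 * (κ - 1) / (3 - κ)) • P + (2 : ℝ) • ((1 : Matrix (Fin n) (Fin n) ℝ) - P)) := by
    rw [hinv, hB, hZ]
    rw [show 2 * (κ - 1) / (3 - κ) = (κ - 1) * (2 / (3 - κ)) by ring]
    simp only [add_mul, mul_add, sub_mul, mul_sub, smul_mul_assoc, mul_smul_comm, hPP, one_mul,
      mul_one, smul_smul, sub_self, smul_zero, add_zero, zero_add]
    module
  refine ⟨IsUnit.of_mul_eq_one _ hAB, hW, ?_⟩
  intro X Y hX hY hlo hup
  rw [hW] at hup
  generalize hWW : c • ((2 * (κ - 1) / (3 - κ)) • P +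
    (2 : ℝ) • ((1 : Matrix (Fin n) (Fin n) ℝ) - P)) = W at hup
  have h2ε : 2 / ε = 4 * c := by rw [hεc]; field_simp; norm_num
  rw [h2ε] at hlo
  have hxx : ∀ x : Fin n → ℝ, 0 ≤ x ⬝ᵥ x := fun x => by
    simpa using dotProduct_star_self_nonneg x
  have hWx : ∀ x : Fin n → ℝ, x ⬝ᵥ (W *ᵥ x) ≤ 2 * c * (x ⬝ᵥ x) := by
    intro x
    rw [← hWW]
    simp only [Matrix.smul_mulVec, Matrix.add_mulVec, Matrix.sub_mulVec, Matrix.one_mulVec,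
      dotProduct_smul, dotProduct_add, dotProduct_sub, hPx, smul_eq_mul]
    have : 2 * (κ - 1) / (3 - κ) ≤ 0 :=
      div_nonpos_of_nonpos_of_nonneg (by linarith) (by linarith)
    have h5 : 0 ≤ c * (v ⬝ᵥ x) ^ 2 := by positivity
    nlinarith
  have lo := fun x y : Fin n → ℝ => hlo.dotProduct_mulVec_nonneg (Sum.elim x y)
  have up := fun x y : Fin n → ℝ => hup.dotProduct_mulVec_nonneg (Sum.elim x y)
  simp only [star_trivial, Matrix.add_mulVec, Matrix.sub_mulVec, Matrix.fromBlocks_mulVec,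
    Matrix.smul_mulVec, Matrix.one_mulVec, dotProduct_add, dotProduct_sub, dotProduct_smul,
    sumElim_dotProduct_sumElim, Sum.elim_comp_inl, Sum.elim_comp_inr, Matrix.neg_mulVec,
    Matrix.zero_mulVec, dotProduct_neg, smul_eq_mul, dotProduct_zero] at lo up
  constructor
  · refine opNorm_le_aux X hX _ (by positivity) (fun x => ?_) (fun x => ?_)
    · have := up x 0
      simp at this
      nlinarith [hWx x, hxx x]
    · have := lo x 0
      simp at this
      linarith
  · refine opNorm_le_aux Y hY _ (by positivity) (fun x => ?_) (fun x => ?_)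
    · have := lo 0 x
      simp at this
      linarith
    · have := up 0 x
      simp at this
      nlinarith [hWx x, hxx x]
end

section
/- Let n ≥ 1 and X, Y, Z′ ∈ S(n). Assume that, in the Loewner order on 2n×2n symmetric matrices, [[X,0],[0,−Y]] ≤ [[Z′,−Z′],[−Z′,Z′]]. Then: (i) X ≤ Y (i.e. Y − X is positive semidefinite); (ii) for every a ∈ ℝⁿ, ⟨(X−Y)a, a⟩ ≤ 4⟨Z′a, a⟩; and (iii) if moreover there is a unit vector a ∈ ℝⁿ with ⟨Z′a, a⟩ < 0, then for all 0 < λ ≤ Λ one has M⁺_{λ,Λ}(X−Y) ≤ 4λ·⟨Z′a, a⟩. -/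
open Metric Set
open scoped Matrix in
theorem psd_quad_le_trace {n : ℕ} {P : Matrix (Fin n) (Fin n) ℝ} (hP : P.PosSemidef)
    (a : Fin n → ℝ) (ha : a ⬝ᵥ a = 1) : (P.mulVec a) ⬝ᵥ a ≤ P.trace := by
  obtain ⟨B, rfl⟩ : ∃ B : Matrix (Fin n) (Fin n) ℝ, P = Bᴴ * B := by
    open scoped MatrixOrder in
    exact CStarAlgebra.nonneg_iff_eq_star_mul_self.mp hP.nonneg
  have h1 : ((Bᴴ * B).mulVec a) ⬝ᵥ a = ∑ i, (∑ j, B i j * a j) ^ 2 := by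
    rw [← Matrix.mulVec_mulVec, dotProduct_comm, Matrix.dotProduct_mulVec,
      Matrix.conjTranspose_eq_transpose_of_trivial, Matrix.vecMul_transpose]
    simp [dotProduct, Matrix.mulVec, sq]
  have h2 : (Bᴴ * B).trace = ∑ i, ∑ j, B i j ^ 2 := by
    rw [Matrix.trace_mul_comm]
    simp [Matrix.trace, Matrix.mul_apply, sq]
  rw [h1, h2]
  refine Finset.sum_le_sum fun i _ => ?_
  have h := Finset.sum_mul_sq_le_sq_mul_sq Finset.univ (fun j => B i j) a
  have h3 : ∑ j, a j ^ 2 = 1 := by rw [← ha]; simp [dotProduct, sq]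
  rw [h3, mul_one] at h
  exact h

open scoped Matrix in
theorem block_inequality_consequences
    (n : ℕ) (hn : 1 ≤ n) (X Y Z' : Matrix (Fin n) (Fin n) ℝ)
    (hX : X.IsHermitian) (hY : Y.IsHermitian) (hZ' : Z'.IsHermitian)
    (hblock : (Matrix.fromBlocks Z' (-Z') (-Z') Z' -
      Matrix.fromBlocks X 0 0 (-Y)).PosSemidef) :
    (Y - X).PosSemidef ∧
    (∀ a : Fin n → ℝ, ((X - Y).mulVec a) ⬝ᵥ a ≤ 4 * ((Z'.mulVec a) ⬝ᵥ a)) ∧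
    (∀ a : Fin n → ℝ, a ⬝ᵥ a = 1 → (Z'.mulVec a) ⬝ᵥ a < 0 →
      ∀ lam Lam : ℝ, 0 < lam → lam ≤ Lam →
        pucciPlus lam Lam (X - Y) ≤ 4 * lam * ((Z'.mulVec a) ⬝ᵥ a)) := by
  have key : ∀ u v : Fin n → ℝ, 0 ≤ (u - v) ⬝ᵥ (Z' *ᵥ (u - v)) - u ⬝ᵥ (X *ᵥ u) + v ⬝ᵥ (Y *ᵥ v) := by
    intro u v
    have h := hblock.dotProduct_mulVec_nonneg (Sum.elim u v)
    have e : star (Sum.elim u v) = Sum.elim u v := by ext i; simp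
    rw [e, Matrix.sub_mulVec, Matrix.fromBlocks_mulVec, Matrix.fromBlocks_mulVec,
      dotProduct_sub, sumElim_dotProduct_sumElim, sumElim_dotProduct_sumElim] at h
    simp only [Sum.elim_comp_inl, Sum.elim_comp_inr, Matrix.neg_mulVec, Matrix.zero_mulVec,
      dotProduct_add, dotProduct_neg, add_zero, zero_add] at h
    simp only [Matrix.mulVec_sub, dotProduct_sub, sub_dotProduct]
    linarith
  have hP : (Y - X).PosSemidef := by
    refine Matrix.PosSemidef.of_dotProduct_mulVec_nonneg (hY.sub hX) fun x => ?_
    have h := key x x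
    simp only [sub_self, zero_dotProduct] at h
    simp only [star_trivial, Matrix.sub_mulVec, dotProduct_sub]
    linarith
  have h2 : ∀ a : Fin n → ℝ, ((X - Y).mulVec a) ⬝ᵥ a ≤ 4 * ((Z'.mulVec a) ⬝ᵥ a) := by
    intro a
    have h := key a (-a)
    simp only [sub_neg_eq_add, Matrix.mulVec_add, Matrix.mulVec_neg, add_dotProduct,
      dotProduct_add, neg_dotProduct, dotProduct_neg, neg_neg] at h
    rw [dotProduct_comm, dotProduct_comm (Z' *ᵥ a), Matrix.sub_mulVec, dotProduct_sub]
    linarith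
  refine ⟨hP, h2, ?_⟩
  intro a ha _ lam Lam hl _
  have hH : (X - Y).IsHermitian := hX.sub hY
  have hev : ∀ i, hH.eigenvalues i ≤ 0 := by
    intro i
    rw [hH.eigenvalues_eq]
    have h := hP.dotProduct_mulVec_nonneg (hH.eigenvectorBasis i)
    rw [← neg_sub X Y, Matrix.neg_mulVec, dotProduct_neg] at h
    simpa using h
  have hp : pucciPlus lam Lam (X - Y) = lam * (X - Y).trace := by
    rw [pucciPlus, dif_pos hH, hH.trace_eq_sum_eigenvalues, Finset.mul_sum]
    refine Finset.sum_congr rfl fun i _ => ?_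
    rw [if_neg (not_lt.mpr (hev i))]
    rfl
  have ht := psd_quad_le_trace hP a ha
  rw [← neg_sub X Y, Matrix.neg_mulVec, neg_dotProduct, Matrix.trace_neg] at ht
  rw [hp, mul_comm 4 lam, mul_assoc]
  exact mul_le_mul_of_nonneg_left (by linarith [h2 a]) hl.le
end
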